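/- arXiv:1407.6077 — 4 statements merged into one kernel-verified Lean document; each statement's English description precedes it below -/
import Mathlib

section
/- Let A be an l×n real matrix and for a tuple c = (c_1,…,c_l) ∈ {1,…,n}^l let Δ_c(A) denote the determinant of the l×l matrix whose t-th column is column c_t of A. Then for all tuples p = (p_1,…,p_l), q = (q_1,…,q_l) ∈ {1,…,n}^l and every 1 ≤ m ≤ l, the Plücker relation holds: Δ_p(A) · Δ_q(A) = Σ_{1 ≤ i_1 < … < i_m ≤ l} Δ_{p′}(A) · Δ_{q′}(A), where p′ is the tuple p with the entries in positions i_1,…,i_m replaced, in order, by q_{l−m+1},…,q_l, and q′ := (q_1,…,q_{l−m}, p_{i_1},…,p_{i_m}). -/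
/-- `Δ_c(A)`: the determinant of the `l × l` matrix whose `t`-th column is column `c t`
of `A`. -/
noncomputable def deltaCol {l n : ℕ} (A : Matrix (Fin l) (Fin n) ℝ) (c : Fin l → Fin n) : ℝ :=
  (A.submatrix id c).det

/-- The tuple `p` with the entries in the positions of `S` (listed increasingly) replaced,
in order, by `q_{l-m+1}, …, q_l` (0-indexed: `q (l-m), …, q (l-1)`). -/
def pluckerP {l n : ℕ} (m : ℕ) (hml : m ≤ l) (p q : Fin l → Fin n)
    (S : {S : Finset (Fin l) // S.card = m}) : Fin l → Fin n := fun t =>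
  if h : t ∈ S.1 then
    q ⟨l - m + ((S.1.orderIsoOfFin S.2).symm ⟨t, h⟩).val, by
      have := ((S.1.orderIsoOfFin S.2).symm ⟨t, h⟩).isLt; omega⟩
  else p t

/-- The tuple `(q_1, …, q_{l-m}, p_{i_1}, …, p_{i_m})` where `i_1 < … < i_m` are the
elements of `S`. -/
def pluckerQ {l n : ℕ} (m : ℕ) (hml : m ≤ l) (p q : Fin l → Fin n)
    (S : {S : Finset (Fin l) // S.card = m}) : Fin l → Fin n := fun t =>
  if h : t.val < l - m then q t
  else p (S.1.orderIsoOfFin S.2 ⟨t.val - (l - m), by have := t.isLt; omega⟩)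

/-!
Fix an alternating form `δ` of degree `ι` on a module with a basis indexed by `ι`, an alternating
map `α` of degree `κ`, and vectors `w : κ → M`. The sum over the `|κ|`-element subsets `S` of `ι`
of `δ (v with v_S replaced by w) • α (v_S)` is alternating in `v`: when `v a = v b`, the terms of
`S` and of its image under the transposition of `a` and `b` cancel. So it suffices to evaluate it
at a basis `v`, and then, being alternating in `w` too, at `w = v_T`, where only the term `S = T`
survives and equals `δ v • α w`. The Plücker relation is the case where `δ` is the determinant
and `α` is the determinant with all but its last `m` arguments frozen.
-/

open Function Equiv Module

section Extend

variable {ι κ E : Type*}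

lemma extend_update_left [DecidableEq ι] [DecidableEq κ] {f : κ → ι} (hf : Injective f)
    (w : κ → E) (v : ι → E) (k : κ) (x : E) :
    extend f (update w k x) v = update (extend f w v) (f k) x := by
  funext i
  by_cases hi : ∃ j, f j = i
  · obtain ⟨j, rfl⟩ := hi
    simp only [hf.extend_apply, update_apply, hf.eq_iff]
  · have hne : i ≠ f k := fun h => hi ⟨k, h.symm⟩
    rw [extend_apply' _ _ _ hi, update_of_ne hne, extend_apply' _ _ _ hi]

lemma extend_update_right_apply [DecidableEq ι] (f : κ → ι) (w : κ → E) (v : ι → E) (k : κ)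
    (x : E) : extend f w (update v (f k) x) = extend f w v := by
  classical
  funext i
  by_cases hi : ∃ j, f j = i
  · simp only [extend_def, dif_pos hi]
  · have hne : i ≠ f k := fun h => hi ⟨k, h.symm⟩
    rw [extend_apply' _ _ _ hi, extend_apply' _ _ _ hi, update_of_ne hne]

lemma extend_update_right_of_notMem_range [DecidableEq ι] {f : κ → ι} (w : κ → E) (v : ι → E)
    {i : ι} (hi : i ∉ Set.range f) (x : E) :
    extend f w (update v i x) = update (extend f w v) i x := by
  classical
  funext t
  by_cases ht : ∃ j, f j = t
  · have hne : t ≠ i := fun h => hi (h ▸ ht)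
    simp only [update_of_ne hne, extend_def, dif_pos ht]
  · simp only [extend_apply' _ _ _ ht, update_apply]

lemma extend_comp_perm {f : κ → ι} (hf : Injective f) (σ : Perm κ) (w : κ → E) (v : ι → E) :
    extend (f ∘ σ) w v = extend f (w ∘ σ.symm) v := by
  funext i
  by_cases hi : ∃ j, f j = i
  · obtain ⟨j, rfl⟩ := hi
    simpa [hf.extend_apply] using (hf.comp σ.injective).extend_apply w v (σ.symm j)
  · have hσ : ¬ ∃ j, (f ∘ σ) j = i := fun ⟨j, hj⟩ => hi ⟨σ j, hj⟩
    rw [extend_apply' _ _ _ hi, extend_apply' _ _ _ hσ]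

lemma extend_perm_comp (f : κ → ι) (τ : Perm ι) (w : κ → E) (v : ι → E) :
    extend (τ ∘ f) w v = extend f w (v ∘ τ) ∘ τ.symm := by
  classical
  funext i
  simp only [extend_def, comp_apply, τ.apply_symm_apply, ← τ.eq_symm_apply]

lemma extend_comp_self (f : κ → ι) (v : ι → E) : extend f (v ∘ f) v = v := by
  classical
  funext i
  by_cases hi : ∃ j, f j = i
  · rw [extend_def, dif_pos hi, comp_apply, hi.choose_spec]
  · rw [extend_apply' _ _ _ hi]

end Extend

section Transversal

variable {ι κ τ : Type*}

lemma exists_perm_of_range_subset [Finite κ] {f g : κ ↪ ι} (h : Set.range f ⊆ Set.range g) :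
    ∃ σ : Perm κ, f = σ.toEmbedding.trans g := by
  choose s hs using fun k => h (Set.mem_range_self k)
  have hs_inj : Injective s := fun a b hab => f.injective (by rw [← hs, ← hs, hab])
  exact ⟨.ofBijective s (Finite.injective_iff_bijective.1 hs_inj), by ext k; exact (hs k).symm⟩

lemma range_eq_of_range_subset [Finite κ] {f g : κ ↪ ι} (h : Set.range f ⊆ Set.range g) :
    Set.range f = Set.range g := by
  obtain ⟨σ, rfl⟩ := exists_perm_of_range_subset h
  exact σ.surjective.range_comp g

/-- The family `h` enumerates each subset of `ι` equipotent to `κ` exactly once, that is, it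
consists of one embedding from each class of embeddings `κ ↪ ι` modulo permutations of `κ`. -/
def IsRangeTransversal (h : τ → κ ↪ ι) : Prop :=
  ∀ f : κ ↪ ι, ∃! t, Set.range (h t) = Set.range f

lemma isRangeTransversal_orderEmbOfFin [LinearOrder ι] (m : ℕ) :
    IsRangeTransversal fun S : {S : Finset ι // S.card = m} =>
      (S.1.orderEmbOfFin S.2).toEmbedding := by
  intro f
  refine ⟨⟨Finset.univ.map f, by simp⟩, by simp, fun S hS => Subtype.ext ?_⟩
  apply Finset.coe_injective
  simpa using hS

end Transversal

section Exchange

variable {R M N ι κ τ : Type*} [CommRing R] [AddCommGroup M] [Module R M]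
  [AddCommGroup N] [Module R N]

lemma alternatingMap_sum_apply (s : Finset τ) (F : τ → M [⋀^κ]→ₗ[R] N) (w : κ → M) :
    (∑ t ∈ s, F t) w = ∑ t ∈ s, F t w :=
  map_sum (AddMonoidHom.mk' (fun G : M [⋀^κ]→ₗ[R] N => G w) fun _ _ => rfl) F s

/-- The alternating map obtained from `δ` by freezing the arguments outside the range of `f`
to those of `v`. The arguments of `v` inside the range of `f` are ignored. -/
noncomputable def restrictArgs (δ : M [⋀^ι]→ₗ[R] N) (f : κ ↪ ι) (v : ι → M) :
    M [⋀^κ]→ₗ[R] N where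
  toFun w := δ (extend f w v)
  map_update_add' w k x y := by
    classical simp only [extend_update_left f.injective, δ.map_update_add]
  map_update_smul' w k c x := by
    classical simp only [extend_update_left f.injective, δ.map_update_smul]
  map_eq_zero_of_eq' w i j hw hij := by
    refine δ.map_eq_zero_of_eq _ ?_ (f.injective.ne hij)
    rw [f.injective.extend_apply, f.injective.extend_apply, hw]

lemma restrictArgs_apply (δ : M [⋀^ι]→ₗ[R] N) (f : κ ↪ ι) (v : ι → M) (w : κ → M) :
    restrictArgs δ f v w = δ (extend f w v) := rfl

/-- The term of the exchange identity in which the vectors `v ∘ f` move from `δ` to `α`, while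
the vectors `w` take their places in `δ`. -/
noncomputable def exchangeTerm (δ : M [⋀^ι]→ₗ[R] R) (α : M [⋀^κ]→ₗ[R] N) (w : κ → M)
    (f : κ ↪ ι) : MultilinearMap R (fun _ : ι => M) N where
  toFun v := δ (extend f w v) • α (v ∘ f)
  map_update_add' v i x y := by
    classical
    by_cases hi : i ∈ Set.range f
    · obtain ⟨k, rfl⟩ := hi
      simp only [extend_update_right_apply,
        update_comp_eq_of_injective _ f.injective, α.map_update_add, smul_add]
    · simp only [extend_update_right_of_notMem_range _ _ hi,
        update_comp_eq_of_notMem_range _ _ hi, δ.map_update_add, add_smul]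
  map_update_smul' v i c x := by
    classical
    by_cases hi : i ∈ Set.range f
    · obtain ⟨k, rfl⟩ := hi
      simp only [extend_update_right_apply,
        update_comp_eq_of_injective _ f.injective, α.map_update_smul, smul_comm c]
    · simp only [extend_update_right_of_notMem_range _ _ hi,
        update_comp_eq_of_notMem_range _ _ hi, δ.map_update_smul, smul_assoc]

variable (δ : M [⋀^ι]→ₗ[R] R) (α : M [⋀^κ]→ₗ[R] N) (w : κ → M)

lemma exchangeTerm_apply (f : κ ↪ ι) (v : ι → M) :
    exchangeTerm δ α w f v = δ (extend f w v) • α (v ∘ f) := rfl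

lemma exchangeTerm_perm_trans [Finite κ] (σ : Perm κ) (f : κ ↪ ι) :
    exchangeTerm δ α w (σ.toEmbedding.trans f) = exchangeTerm δ α w f := by
  classical
  have := Fintype.ofFinite κ
  ext v
  have hδ : δ (extend (f ∘ σ) w v) = Perm.sign σ • δ (extend f w v) := by
    rw [extend_comp_perm f.injective, ← restrictArgs_apply, AlternatingMap.map_perm,
      restrictArgs_apply, Perm.sign_symm]
  have hα : α (v ∘ f ∘ σ) = Perm.sign σ • α (v ∘ f) := α.map_perm (v ∘ f) σ
  calc δ (extend (f ∘ σ) w v) • α (v ∘ f ∘ σ)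
      = (Perm.sign σ * Perm.sign σ) • δ (extend f w v) • α (v ∘ f) := by
        rw [hδ, hα, smul_assoc, smul_comm (δ _), mul_smul]
    _ = δ (extend f w v) • α (v ∘ f) := by rw [Int.units_mul_self, one_smul]

lemma exchangeTerm_congr_range [Finite κ] {f g : κ ↪ ι} (h : Set.range f = Set.range g) :
    exchangeTerm δ α w f = exchangeTerm δ α w g := by
  obtain ⟨σ, rfl⟩ := exists_perm_of_range_subset h.subset
  exact exchangeTerm_perm_trans δ α w σ g

lemma exchangeTerm_trans_swap [DecidableEq ι] (f : κ ↪ ι) {v : ι → M} {a b : ι}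
    (hv : v a = v b) (hab : a ≠ b) :
    exchangeTerm δ α w (f.trans (swap a b).toEmbedding) v = -exchangeTerm δ α w f v := by
  have hv_swap : v ∘ swap a b = v := by
    rw [comp_swap_eq_update, hv, update_eq_self, ← hv, update_eq_self]
  have hδ : δ (extend (swap a b ∘ f) w v) = -δ (extend f w v) := by
    rw [extend_perm_comp, hv_swap, symm_swap, δ.map_swap _ hab]
  calc δ (extend (swap a b ∘ f) w v) • α ((v ∘ swap a b) ∘ f)
      = -(δ (extend f w v) • α (v ∘ f)) := by rw [hδ, hv_swap, neg_smul]

lemma exchangeTerm_eq_zero_of_mem_range_iff (f : κ ↪ ι) {v : ι → M} {a b : ι}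
    (hv : v a = v b) (hab : a ≠ b) (hf : a ∈ Set.range f ↔ b ∈ Set.range f) :
    exchangeTerm δ α w f v = 0 := by
  rw [exchangeTerm_apply]
  by_cases ha : a ∈ Set.range f
  · obtain ⟨j, rfl⟩ := ha
    obtain ⟨k, rfl⟩ := hf.1 ⟨j, rfl⟩
    rw [α.map_eq_zero_of_eq (v ∘ f) hv (ne_of_apply_ne f hab), smul_zero]
  · have hext : extend f w v a = extend f w v b := by
      rw [extend_apply' _ _ _ ha, extend_apply' _ _ _ (mt hf.2 ha), hv]
    rw [δ.map_eq_zero_of_eq _ hext hab, zero_smul]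

variable [Fintype τ] {h : τ → κ ↪ ι}

lemma sum_exchangeTerm_eq_zero_of_eq [Finite κ] (hh : IsRangeTransversal h) {v : ι → M} {a b : ι}
    (hv : v a = v b) (hab : a ≠ b) : ∑ t, exchangeTerm δ α w (h t) v = 0 := by
  classical
  choose g hg hg_unique using fun t => hh ((h t).trans (swap a b).toEmbedding)
  have range_g (t : τ) : Set.range (h (g t)) = swap a b '' Set.range (h t) := by
    rw [hg, ← Set.range_comp]; rfl
  refine Finset.sum_involution (fun t _ => g t) (fun t _ => ?_) (fun t _ ht hgt => ht ?_)
    (fun _ _ => Finset.mem_univ _) (fun t _ => ?_)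
  · rw [exchangeTerm_congr_range δ α w (hg t), exchangeTerm_trans_swap δ α w _ hv hab,
      add_neg_cancel]
  · have swap_mem {i : ι} (hi : i ∈ Set.range (h t)) : swap a b i ∈ Set.range (h t) := by
      have := Set.mem_image_of_mem (swap a b) hi
      rwa [← range_g, hgt] at this
    exact exchangeTerm_eq_zero_of_mem_range_iff δ α w _ hv hab
      ⟨fun ha => by simpa using swap_mem ha, fun hb => by simpa using swap_mem hb⟩
  · refine (hg_unique (g t) t ?_).symm
    change _ = Set.range (swap a b ∘ h (g t))
    rw [Set.range_comp, range_g, ← Set.image_comp, ← Perm.coe_mul, swap_mul_self, Perm.coe_one,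
      Set.image_id]

/-- The sum of all exchange terms, as an alternating map in the vectors fed to `δ`. -/
noncomputable def exchangeSum [Finite κ] (hh : IsRangeTransversal h) : M [⋀^ι]→ₗ[R] N where
  toMultilinearMap := ∑ t, exchangeTerm δ α w (h t)
  map_eq_zero_of_eq' v a b hv hab := by
    simpa using sum_exchangeTerm_eq_zero_of_eq δ α w hh hv hab

lemma exchangeSum_apply [Finite κ] (hh : IsRangeTransversal h) (v : ι → M) :
    exchangeSum δ α w hh v = ∑ t, δ (extend (h t) w v) • α (v ∘ h t) := by
  change (∑ t, exchangeTerm δ α w (h t)) v = _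
  simp only [sum_apply, exchangeTerm_apply]

lemma map_extend_comp_eq_zero {f g : κ ↪ ι} (hfg : ¬ Set.range f ⊆ Set.range g) (v : ι → M) :
    δ (extend g (v ∘ f) v) = 0 := by
  obtain ⟨_, ⟨k, rfl⟩, hk⟩ := Set.not_subset.1 hfg
  refine δ.map_eq_zero_of_eq _ (i := g k) (j := f k) ?_ (fun h => hk ⟨k, h⟩)
  rw [g.injective.extend_apply, extend_apply' _ _ _ hk, comp_apply]

lemma sum_exchangeTerm_comp [Finite κ] (hh : IsRangeTransversal h) (v : ι → M) (f : κ ↪ ι) :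
    ∑ t, exchangeTerm δ α (v ∘ f) (h t) v = δ v • α (v ∘ f) := by
  obtain ⟨t₀, ht₀, t₀_unique⟩ := hh f
  rw [Finset.sum_eq_single t₀]
  · rw [exchangeTerm_congr_range δ α _ ht₀, exchangeTerm_apply, extend_comp_self]
  · intro t _ ht
    have hfg : ¬ Set.range f ⊆ Set.range (h t) := fun hsub =>
      ht (t₀_unique t (range_eq_of_range_subset hsub).symm)
    rw [exchangeTerm_apply, map_extend_comp_eq_zero δ hfg, zero_smul]
  · exact fun ht => absurd (Finset.mem_univ t₀) ht

lemma basis_map_smul_map_eq_sum_extend [Finite κ] (hh : IsRangeTransversal h) (b : Basis ι R M) :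
    δ b • α w = ∑ t, δ (extend (h t) w b) • α (b ∘ h t) := by
  have alternating_eq : δ b • α = ∑ t, (restrictArgs δ (h t) b).smulRight (α (b ∘ h t)) :=
    b.ext_alternating fun f hf => by
      simpa [alternatingMap_sum_apply, exchangeTerm_apply, restrictArgs_apply, comp_def] using
        (sum_exchangeTerm_comp δ α hh b ⟨f, hf⟩).symm
  simpa [alternatingMap_sum_apply, restrictArgs_apply] using DFunLike.congr_fun alternating_eq w

theorem map_smul_map_eq_sum_extend [Finite ι] [Finite κ] (hh : IsRangeTransversal h)
    (b : Basis ι R M) (v : ι → M) :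
    δ v • α w = ∑ t, δ (extend (h t) w v) • α (v ∘ h t) := by
  have alternating_eq : δ.smulRight (α w) = exchangeSum δ α w hh :=
    b.ext_alternating fun f hf => by
      let σ : Perm ι := .ofBijective f (Finite.injective_iff_bijective.1 hf)
      have hσ : ⇑(b.reindex σ.symm) = fun i => b (f i) := by
        ext i; simp [σ]
      rw [exchangeSum_apply, ← hσ]
      exact basis_map_smul_map_eq_sum_extend δ α w hh (b.reindex σ.symm)
  simpa [exchangeSum_apply] using DFunLike.congr_fun alternating_eq v

theorem map_mul_map_eq_sum_extend [Finite ι] [Finite κ] (hh : IsRangeTransversal h)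
    (b : Basis ι R M) (ε : M [⋀^ι]→ₗ[R] R) (g : κ ↪ ι) (v u : ι → M) :
    δ v * ε u = ∑ t, δ (extend (h t) (u ∘ g) v) * ε (extend g (v ∘ h t) u) := by
  simpa [restrictArgs_apply, extend_comp_self] using
    map_smul_map_eq_sum_extend δ (restrictArgs ε g u) (u ∘ g) hh b v

end Exchange

section Plucker

variable {l m n : ℕ}

/-- The embedding of `Fin m` onto the last `m` elements of `Fin l`. -/
def finalEmb (hml : m ≤ l) : Fin m ↪ Fin l :=
  (Fin.natAddEmb (l - m)).trans (finCongr (Nat.sub_add_cancel hml)).toEmbedding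

lemma val_finalEmb (hml : m ≤ l) (j : Fin m) : (finalEmb hml j : ℕ) = l - m + j := rfl

lemma pluckerP_eq_extend (hml : m ≤ l) (p q : Fin l → Fin n)
    (S : {S : Finset (Fin l) // S.card = m}) :
    pluckerP m hml p q S = extend (S.1.orderEmbOfFin S.2) (q ∘ finalEmb hml) p := by
  have h_inj := (S.1.orderEmbOfFin S.2).injective
  funext t
  by_cases ht : t ∈ S.1
  · obtain ⟨j, hj⟩ := (S.1.orderIsoOfFin S.2).surjective ⟨t, ht⟩
    obtain rfl : S.1.orderEmbOfFin S.2 j = t := congrArg Subtype.val hj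
    rw [h_inj.extend_apply, pluckerP, dif_pos ht]
    simp only [← hj, OrderIso.symm_apply_apply]
    rfl
  · have ht' : ¬ ∃ j, S.1.orderEmbOfFin S.2 j = t := by
      rintro ⟨j, rfl⟩
      exact ht (S.1.orderEmbOfFin_mem S.2 j)
    rw [extend_apply' _ _ _ ht', pluckerP, dif_neg ht]

lemma pluckerQ_eq_extend (hml : m ≤ l) (p q : Fin l → Fin n)
    (S : {S : Finset (Fin l) // S.card = m}) :
    pluckerQ m hml p q S = extend (finalEmb hml) (p ∘ S.1.orderEmbOfFin S.2) q := by
  funext t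
  by_cases ht : t.val < l - m
  · have ht' : ¬ ∃ j, finalEmb hml j = t := by
      rintro ⟨j, rfl⟩
      rw [val_finalEmb] at ht
      omega
    rw [extend_apply' _ _ _ ht', pluckerQ, dif_pos ht]
  · obtain ⟨j, rfl⟩ : ∃ j, finalEmb hml j = t :=
      ⟨⟨t - (l - m), by omega⟩, Fin.ext (by rw [val_finalEmb]; dsimp only; omega)⟩
    rw [(finalEmb hml).injective.extend_apply, pluckerQ, dif_neg ht]
    simp only [val_finalEmb, Nat.add_sub_cancel_left]
    rfl

variable {R : Type*} [CommRing R]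

lemma det_submatrix_id_eq_detRowAlternating {ι ν : Type*} [Fintype ι] [DecidableEq ι]
    (A : Matrix ι ν R) (c : ι → ν) :
    (A.submatrix id c).det = Matrix.detRowAlternating (A.col ∘ c) :=
  (Matrix.det_transpose _).symm

theorem stmt_6_general (hml : m ≤ l) (A : Matrix (Fin l) (Fin n) R) (p q : Fin l → Fin n) :
    (A.submatrix id p).det * (A.submatrix id q).det =
      ∑ S : {S : Finset (Fin l) // S.card = m},
        (A.submatrix id (pluckerP m hml p q S)).det *
          (A.submatrix id (pluckerQ m hml p q S)).det := by
  have col_comp_extend (f : Fin m → Fin l) (w : Fin m → Fin n) (v : Fin l → Fin n) :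
      A.col ∘ extend f w v = extend f (A.col ∘ w) (A.col ∘ v) :=
    funext fun i => apply_extend A.col f v i
  simp only [det_submatrix_id_eq_detRowAlternating, pluckerP_eq_extend, pluckerQ_eq_extend,
    col_comp_extend]
  exact map_mul_map_eq_sum_extend _ (isRangeTransversal_orderEmbOfFin m)
    (Pi.basisFun R (Fin l)) _ (finalEmb hml) (A.col ∘ p) (A.col ∘ q)

end Plucker

/-- the Plücker relations
`Δ_p(A) · Δ_q(A) = Σ_{i_1 < … < i_m} Δ_{p′}(A) · Δ_{q′}(A)`. -/
theorem stmt_6 (l n m : ℕ) (hm : 1 ≤ m) (hml : m ≤ l) (hln : l ≤ n)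
    (A : Matrix (Fin l) (Fin n) ℝ) (p q : Fin l → Fin n) :
    deltaCol A p * deltaCol A q =
      ∑ S : {S : Finset (Fin l) // S.card = m},
        deltaCol A (pluckerP m hml p q S) * deltaCol A (pluckerQ m hml p q S) :=
  stmt_6_general hml A p q
end

section
/- For every k ≥ 2 there exists a totally nonnegative (2k−1)×(2k−1) real matrix M with the following property: for all subsets U, W ⊆ {1,…,2k−1} with |U| = |W| = r ≥ 1, the minor det M[U|W] equals 0 if and only if r ≥ k+1, or r = k and W ⊆ {2,…,2k−2} (equivalently r = k and 1 ∉ W and 2k−1 ∉ W); all other minors of M are strictly positive. -/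
/-- The minor of the (1-indexed) matrix `M` with rows `U` and columns `W`, both taken in
increasing order.  When `U` and `W` have different cardinalities we set it to `0`
(this case is never used); for `U = W = ∅` it is `1` (the empty determinant). -/
noncomputable def minorN (M : ℕ → ℕ → ℝ) (U W : Finset ℕ) : ℝ :=
  if h : U.card = W.card then
    Matrix.det (Matrix.of fun i j : Fin U.card =>
      M (U.orderIsoOfFin rfl i).val (W.orderIsoOfFin h.symm j).val)
  else 0

/-!
The matrix is `M = A * B * V`. The factors `A` (with `k` columns) and `B` (of size `k × (k + 1)`)
are sections of the Hilbert matrix, which is totally positive as a Cauchy matrix; hence `A * B` has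
rank at most `k` and positive minors of every order up to `k`. The factor `V` keeps three diagonal
blocks of a section of the Hilbert matrix: its rows are split into the first, the `k - 1` middle
ones and the last, and its columns into `1`, the interior ones and `n`, where `n = 2k - 1`.

By Cauchy–Binet, `det M[U|W]` is the sum over `r`-sets `e` of rows of `V` of
`det (A * B)[U|e] * det V[e|W]`. If `e` and `W` meet the three blocks equally often, then `V[e|W]`
is block diagonal with totally positive blocks; otherwise it has a zero block too large for its
determinant to survive (Frobenius–König). So for `r ≤ k` the minor is positive exactly when a
matching `e` exists, that is, when at most `k - 1` columns of `W` are interior.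
-/

open Finset

section CauchyBinet

variable {m n R : Type*} [Fintype n] [DecidableEq n] [CommRing R]

lemma det_mul_eq_sum_fun [Fintype m] (A : Matrix n m R) (B : Matrix m n R) :
    (A * B).det = ∑ φ : n → m, (A.submatrix id φ).det * ∏ i, B (φ i) i := by
  simp only [Matrix.det_apply', Matrix.mul_apply, Matrix.submatrix_apply, id, prod_univ_sum,
    Fintype.piFinset_univ, mul_sum, sum_mul]
  rw [sum_comm]
  refine sum_congr rfl fun φ _ => sum_congr rfl fun σ _ => ?_
  rw [prod_mul_distrib, mul_assoc]

lemma det_submatrix_eq_zero_of_not_injective (A : Matrix n m R) {φ : n → m}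
    (hφ : ¬ Function.Injective φ) : (A.submatrix id φ).det = 0 := by
  obtain ⟨i, j, hij, hne⟩ := Function.not_injective_iff.1 hφ
  exact Matrix.det_zero_of_column_eq hne fun l => by simp only [Matrix.submatrix_apply, hij]

lemma det_mul_eq_zero_of_card_lt [Fintype m] (A : Matrix n m R) (B : Matrix m n R)
    (h : Fintype.card m < Fintype.card n) : (A * B).det = 0 := by
  rw [det_mul_eq_sum_fun]
  refine sum_eq_zero fun φ _ => ?_
  have hφ : ¬ Function.Injective φ := fun hφ => h.not_ge (Fintype.card_le_of_injective φ hφ)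
  rw [det_submatrix_eq_zero_of_not_injective A hφ, zero_mul]

lemma det_submatrix_mul_det_submatrix_eq_sum_perm (A : Matrix n m R) (B : Matrix m n R)
    (e : n → m) : (A.submatrix id e).det * (B.submatrix e id).det =
      ∑ σ : Equiv.Perm n, (A.submatrix id (e ∘ σ)).det * ∏ i, B (e (σ i)) i := by
  rw [Matrix.det_apply' (B.submatrix e id), mul_sum]
  refine sum_congr rfl fun σ _ => ?_
  have hσ : (A.submatrix id (e ∘ σ)).det = Equiv.Perm.sign σ * (A.submatrix id e).det :=
    Matrix.det_permute' σ (A.submatrix id e)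
  rw [hσ]
  simp only [Matrix.submatrix_apply, id]
  ring

end CauchyBinet

section OrderEmbedding

variable {r : ℕ} {T P : Type*} [LinearOrder T]

lemma orderEmb_comp_perm_injective :
    Function.Injective fun p : (Fin r ↪o T) × Equiv.Perm (Fin r) => (p.1 ∘ p.2 : Fin r → T) := by
  rintro ⟨e, σ⟩ ⟨e', σ'⟩ (h : e ∘ σ = e' ∘ σ')
  have hrange : Set.range e = Set.range e' := by
    rw [← σ.surjective.range_comp e, h, σ'.surjective.range_comp e']
  obtain rfl : e = e' :=
    DFunLike.coe_injective ((StrictMono.range_inj e.strictMono e'.strictMono).1 hrange)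
  exact congrArg (e, ·) (Equiv.ext fun i => e.injective (congrFun h i))

lemma exists_orderEmb_comp_perm_eq {φ : Fin r → T} (hφ : Function.Injective φ) :
    ∃ (e : Fin r ↪o T) (σ : Equiv.Perm (Fin r)), e ∘ σ = φ := by
  have hsort : StrictMono (φ ∘ Tuple.sort φ) :=
    (Tuple.monotone_sort φ).strictMono_of_injective (hφ.comp (Tuple.sort φ).injective)
  exact ⟨OrderEmbedding.ofStrictMono _ hsort, (Tuple.sort φ)⁻¹, by ext i; simp⟩

theorem det_mul_eq_sum_orderEmb [Fintype T] {R : Type*} [CommRing R]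
    (A : Matrix (Fin r) T R) (B : Matrix T (Fin r) R) :
    (A * B).det = ∑ e : Fin r ↪o T, (A.submatrix id e).det * (B.submatrix e id).det := by
  simp only [det_mul_eq_sum_fun, det_submatrix_mul_det_submatrix_eq_sum_perm]
  rw [← Fintype.sum_prod_type' (f := fun (e : Fin r ↪o T) (σ : Equiv.Perm (Fin r)) =>
    (A.submatrix id (e ∘ σ)).det * ∏ i, B (e (σ i)) i)]
  symm
  refine sum_of_injOn (fun p => p.1 ∘ p.2) orderEmb_comp_perm_injective.injOn
    (fun _ _ => mem_coe.2 (mem_univ _)) (fun φ _ hφ => ?_) fun _ _ => rfl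
  rw [det_submatrix_eq_zero_of_not_injective, zero_mul]
  intro hinj
  obtain ⟨e, σ, rfl⟩ := exists_orderEmb_comp_perm_eq hinj
  exact hφ ⟨(e, σ), mem_coe.2 (mem_univ _), rfl⟩

lemma nonempty_orderEmb_of_card_le {α β : Type*} [LinearOrder α] [LinearOrder β] [Fintype α]
    [Fintype β] (h : Fintype.card α ≤ Fintype.card β) : Nonempty (α ↪o β) :=
  ⟨(Fintype.orderIsoFinOfCardEq α rfl).symm.toOrderEmbedding.trans
    ((univ : Finset β).orderEmbOfCardLe h)⟩

theorem exists_orderEmb_comp_eq_iff [Fintype T] [LinearOrder P] {ρ : T → P} {c : Fin r → P}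
    (hρ : Monotone ρ) (hc : Monotone c) :
    (∃ e : Fin r ↪o T, ρ ∘ e = c) ↔ ∀ p, #{i | c i = p} ≤ #{t | ρ t = p} := by
  constructor
  · rintro ⟨e, rfl⟩ p
    refine card_le_card_of_injOn e (fun i hi => ?_) e.injective.injOn
    simpa using hi
  · intro hcard
    have hfibre (p : P) : Nonempty ({i // c i = p} ↪o {t // ρ t = p}) :=
      nonempty_orderEmb_of_card_le (by simpa only [Fintype.card_subtype] using hcard p)
    let ψ (p : P) := (hfibre p).some
    have hψ {i : Fin r} {p : P} (hi : c i = p) : (ψ (c i) ⟨i, rfl⟩ : T) = ψ p ⟨i, hi⟩ := by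
      subst hi
      rfl
    have hρψ (i : Fin r) : ρ (ψ (c i) ⟨i, rfl⟩) = c i := (ψ (c i) ⟨i, rfl⟩).2
    have hmono : StrictMono fun i => (ψ (c i) ⟨i, rfl⟩ : T) := by
      intro i j hij
      rcases (hc hij.le).lt_or_eq with hlt | heq
      · exact hρ.reflect_lt (by rwa [hρψ, hρψ])
      · simpa only [hψ heq, Subtype.coe_lt_coe] using (ψ (c j)).strictMono (Subtype.mk_lt_mk.2 hij)
    exact ⟨OrderEmbedding.ofStrictMono _ hmono, funext hρψ⟩

end OrderEmbedding

section TotallyPositive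

variable {m n K : Type*} [Preorder m] [Preorder n] [CommRing K] [LinearOrder K]

/-- Strict total positivity: every minor is positive. A minor is encoded by two order embeddings,
which list its rows and its columns in increasing order. -/
def IsTotallyPositive (A : Matrix m n K) : Prop :=
  ∀ ⦃r : ℕ⦄ (f : Fin r ↪o m) (g : Fin r ↪o n), 0 < (A.submatrix f g).det

namespace IsTotallyPositive

lemma submatrix {m' n' : Type*} [Preorder m'] [Preorder n'] {A : Matrix m n K}
    (hA : IsTotallyPositive A) (f : m' ↪o m) (g : n' ↪o n) : IsTotallyPositive (A.submatrix f g) :=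
  fun _ f' g' => hA (f'.trans f) (g'.trans g)

lemma det_pos {ι : Type*} [Fintype ι] [LinearOrder ι] {A : Matrix ι ι K}
    (hA : IsTotallyPositive A) : 0 < A.det := by
  let e : Fin (Fintype.card ι) ≃o ι := Fintype.orderIsoFinOfCardEq ι rfl
  rw [← Matrix.det_submatrix_equiv_self e.toEquiv A]
  exact hA e.toOrderEmbedding e.toOrderEmbedding

lemma det_submatrix_mul_pos [IsStrictOrderedRing K] {T : Type*} [Fintype T] [LinearOrder T]
    {A : Matrix m T K} {B : Matrix T n K} (hA : IsTotallyPositive A) (hB : IsTotallyPositive B)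
    {r : ℕ} (hr : r ≤ Fintype.card T) (f : Fin r ↪o m) (g : Fin r ↪o n) :
    0 < ((A * B).submatrix f g).det := by
  rw [← Matrix.submatrix_mul_equiv A B f (Equiv.refl T) g, det_mul_eq_sum_orderEmb]
  exact sum_pos (fun e _ => mul_pos (hA f e) (hB e g))
    ⟨(univ : Finset T).orderEmbOfCardLe hr, mem_univ _⟩

end IsTotallyPositive

end TotallyPositive

section Cauchy

/-- The Cauchy matrix with nodes `x` and `y`; an entry whose denominator vanishes is `0`. -/
def cauchyMatrix {m n K : Type*} [Field K] (x : m → K) (y : n → K) : Matrix m n K :=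
  .of fun i j => (x i + y j)⁻¹

lemma inv_add_eq_mul_add {K : Type*} [Field K] {x y x₀ y₀ : K} (h : x + y ≠ 0)
    (hx₀ : x₀ + y ≠ 0) (hy₀ : x + y₀ ≠ 0) :
    (x + y)⁻¹ = (x - x₀) / (x + y₀) * ((y - y₀) / (x₀ + y) * (x + y)⁻¹) +
      (x₀ + y₀) / (x + y₀) * (x₀ + y)⁻¹ := by
  field_simp
  ring

lemma det_cauchyMatrix_succ {K : Type*} [Field K] {r : ℕ} {x y : Fin (r + 1) → K}
    (hxy : ∀ i j, x i + y j ≠ 0) :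
    (cauchyMatrix x y).det = (x 0 + y 0)⁻¹ * ((∏ i, (Fin.tail x i - x 0) / (Fin.tail x i + y 0)) *
      ((∏ j, (Fin.tail y j - y 0) / (x 0 + Fin.tail y j)) *
        (cauchyMatrix (Fin.tail x) (Fin.tail y)).det)) := by
  -- `N` arises by subtracting the multiples of row `0` that clear column `0`.
  let N : Matrix (Fin (r + 1)) (Fin (r + 1)) K := .of (Fin.cons (fun j => (x 0 + y j)⁻¹) fun i j =>
    (x i.succ - x 0) / (x i.succ + y 0) * ((y j - y 0) / (x 0 + y j) * (x i.succ + y j)⁻¹))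
  have hreduce : (cauchyMatrix x y).det = N.det := by
    refine Matrix.det_eq_of_forall_row_eq_smul_add_const
      (Fin.cons 0 fun i => (x 0 + y 0) / (x i.succ + y 0)) 0 (Fin.cons_zero _ _) fun i j => ?_
    cases i using Fin.cases with
    | zero => simp [N, cauchyMatrix]
    | succ i => exact inv_add_eq_mul_add (hxy _ _) (hxy _ _) (hxy _ _)
  have hcolumn (i : Fin r) : N i.succ 0 = 0 := by simp [N]
  rw [hreduce, Matrix.det_succ_column_zero, Fin.sum_univ_succ]
  simp only [hcolumn, mul_zero, zero_mul, sum_const_zero, add_zero, Fin.val_zero, pow_zero, one_mul]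
  rw [← Matrix.det_mul_row, ← Matrix.det_mul_column]
  rfl

variable {K : Type*} [Field K] [LinearOrder K] [IsStrictOrderedRing K]

lemma det_cauchyMatrix_pos {r : ℕ} {x y : Fin r → K} (hx : StrictMono x) (hy : StrictMono y)
    (hxy : ∀ i j, 0 < x i + y j) : 0 < (cauchyMatrix x y).det := by
  induction r with
  | zero => simp
  | succ r ih =>
    rw [det_cauchyMatrix_succ fun i j => (hxy i j).ne']
    refine mul_pos (inv_pos.2 (hxy 0 0)) (mul_pos (prod_pos fun i _ => ?_)
      (mul_pos (prod_pos fun j _ => ?_) ?_))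
    · exact div_pos (sub_pos.2 (hx (Fin.succ_pos i))) (hxy i.succ 0)
    · exact div_pos (sub_pos.2 (hy (Fin.succ_pos j))) (hxy 0 j.succ)
    · exact ih (hx.comp Fin.strictMono_succ) (hy.comp Fin.strictMono_succ)
        fun i j => hxy i.succ j.succ

lemma isTotallyPositive_cauchyMatrix {m n : Type*} [Preorder m] [Preorder n]
    {x : m → K} {y : n → K} (hx : StrictMono x) (hy : StrictMono y)
    (hxy : ∀ i j, 0 < x i + y j) : IsTotallyPositive (cauchyMatrix x y) :=
  fun _ f g => det_cauchyMatrix_pos (hx.comp f.strictMono) (hy.comp g.strictMono)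
    fun i j => hxy (f i) (g j)

end Cauchy

section DiagBlocks

/-- The part of `A` supported on its diagonal blocks, the rows and columns being grouped into
blocks by the labellings `ρ` and `γ`. -/
def diagBlocks {m n P R : Type*} [DecidableEq P] [Zero R] (ρ : m → P) (γ : n → P)
    (A : Matrix m n R) : Matrix m n R :=
  .of fun i j => if ρ i = γ j then A i j else 0

lemma det_eq_zero_of_zero_block {n R : Type*} [Fintype n] [DecidableEq n] [CommRing R]
    {A : Matrix n n R} {S T : Finset n} (hST : Fintype.card n < #S + #T)
    (hA : ∀ i ∈ S, ∀ j ∈ T, A i j = 0) : A.det = 0 := by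
  rw [Matrix.det_apply]
  refine sum_eq_zero fun σ _ => ?_
  obtain ⟨i, hi⟩ : (S ∩ T.map σ.toEmbedding).Nonempty :=
    inter_nonempty_of_card_lt_card_add_card (subset_univ _) (subset_univ _) (by simpa using hST)
  obtain ⟨hiS, hiT⟩ := mem_inter.1 hi
  obtain ⟨j, hjT, rfl⟩ := mem_map.1 hiT
  have hprod : ∏ i, A (σ i) i = 0 := prod_eq_zero (mem_univ j) (hA (σ j) hiS j hjT)
  rw [hprod, smul_zero]

variable {P : Type*} [LinearOrder P]

lemma det_diagBlocks_pos {ι K : Type*} [Fintype ι] [LinearOrder ι] [CommRing K] [LinearOrder K]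
    [IsStrictOrderedRing K] {A : Matrix ι ι K} (hA : IsTotallyPositive A) (c : ι → P) :
    0 < (diagBlocks c c A).det := by
  have htri : (diagBlocks c c A).BlockTriangular c := fun i j hij => if_neg hij.ne'
  rw [htri.det]
  refine prod_pos fun p _ => ?_
  have hblock : (diagBlocks c c A).toSquareBlock c p =
      A.submatrix (OrderEmbedding.subtype (c · = p)) (OrderEmbedding.subtype (c · = p)) := by
    ext i j
    exact if_pos (i.2.trans j.2.symm)
  rw [hblock]
  exact (hA.submatrix _ _).det_pos

lemma det_diagBlocks_eq_zero {r : ℕ} {R : Type*} [CommRing R] (A : Matrix (Fin r) (Fin r) R)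
    {b c : Fin r → P} (hb : Monotone b) (hc : Monotone c) (hbc : b ≠ c) :
    (diagBlocks b c A).det = 0 := by
  -- If `b i < c i`, monotonicity makes the rows `≤ i` vanish on the columns `≥ i`.
  obtain ⟨i, hi⟩ := Function.ne_iff.1 hbc
  have hcard : Fintype.card (Fin r) < #(Iic i) + #(Ici i) := by
    rw [Fintype.card_fin, Fin.card_Iic, Fin.card_Ici]
    omega
  rcases hi.lt_or_gt with hlt | hgt
  · refine det_eq_zero_of_zero_block hcard fun a ha d hd => if_neg ?_
    exact ((hb (mem_Iic.1 ha)).trans_lt (hlt.trans_le (hc (mem_Ici.1 hd)))).ne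
  · refine det_eq_zero_of_zero_block (add_comm #(Iic i) _ ▸ hcard) fun a ha d hd => if_neg ?_
    exact ((hc (mem_Iic.1 hd)).trans_lt (hgt.trans_le (hb (mem_Ici.1 ha)))).ne'

end DiagBlocks

section Product

variable {m n S T P K : Type*} [Fintype S] [Fintype T] [LinearOrder T] [LinearOrder P] [CommRing K]
  {ρ : T → P} {γ : n → P} {r : ℕ}

lemma det_submatrix_mul_diagBlocks (D : Matrix m T K) (C : Matrix T n K) (ρ : T → P) (γ : n → P)
    (f : Fin r → m) (g : Fin r → n) :
    ((D * diagBlocks ρ γ C).submatrix f g).det = ∑ e : Fin r ↪o T,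
      (D.submatrix f e).det * (diagBlocks (ρ ∘ e) (γ ∘ g) (C.submatrix e g)).det := by
  rw [← Matrix.submatrix_mul_equiv _ _ f (Equiv.refl T) g, det_mul_eq_sum_orderEmb]
  rfl

lemma det_submatrix_mul_mul_diagBlocks_eq_zero [Preorder n] (A : Matrix m S K) (B : Matrix S T K)
    (C : Matrix T n K) (hρ : Monotone ρ) (hγ : Monotone γ) (f : Fin r → m) (g : Fin r ↪o n)
    (h : ¬ (r ≤ Fintype.card S ∧ ∀ p, #{i | γ (g i) = p} ≤ #{t | ρ t = p})) :
    ((A * B * diagBlocks ρ γ C).submatrix f g).det = 0 := by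
  have hγg : Monotone (γ ∘ g) := hγ.comp g.monotone
  by_cases hr : r ≤ Fintype.card S
  · rw [det_submatrix_mul_diagBlocks]
    refine sum_eq_zero fun e _ => ?_
    have he : ρ ∘ e ≠ γ ∘ g := fun he =>
      h ⟨hr, (exists_orderEmb_comp_eq_iff hρ hγg).1 ⟨e, he⟩⟩
    rw [det_diagBlocks_eq_zero _ (hρ.comp e.monotone) hγg he, mul_zero]
  · rw [Matrix.mul_assoc, ← Matrix.submatrix_mul_equiv _ _ f (Equiv.refl S) g]
    exact det_mul_eq_zero_of_card_lt _ _ (by simpa using hr)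

variable [Preorder m] [Preorder n] [LinearOrder S] [LinearOrder K] [IsStrictOrderedRing K]
  {A : Matrix m S K} {B : Matrix S T K} {C : Matrix T n K}

lemma det_submatrix_mul_mul_diagBlocks_pos (hA : IsTotallyPositive A) (hB : IsTotallyPositive B)
    (hC : IsTotallyPositive C) (hρ : Monotone ρ) (hγ : Monotone γ) (f : Fin r ↪o m)
    (g : Fin r ↪o n) (hr : r ≤ Fintype.card S)
    (hcard : ∀ p, #{i | γ (g i) = p} ≤ #{t | ρ t = p}) :
    0 < ((A * B * diagBlocks ρ γ C).submatrix f g).det := by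
  have hγg : Monotone (γ ∘ g) := hγ.comp g.monotone
  have hAB (e : Fin r ↪o T) : 0 < ((A * B).submatrix f e).det := hA.det_submatrix_mul_pos hB hr f e
  have hpos {e : Fin r ↪o T} (he : ρ ∘ e = γ ∘ g) :
      0 < (diagBlocks (ρ ∘ e) (γ ∘ g) (C.submatrix e g)).det :=
    he ▸ det_diagBlocks_pos (hC.submatrix e g) _
  rw [det_submatrix_mul_diagBlocks]
  refine sum_pos' (fun e _ => mul_nonneg (hAB e).le ?_) ?_
  · by_cases he : ρ ∘ e = γ ∘ g
    · exact (hpos he).le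
    · exact (det_diagBlocks_eq_zero _ (hρ.comp e.monotone) hγg he).ge
  · obtain ⟨e, he⟩ := (exists_orderEmb_comp_eq_iff hρ hγg).2 hcard
    exact ⟨e, mem_univ e, mul_pos (hAB e) (hpos he)⟩

theorem det_submatrix_mul_mul_diagBlocks_eq_zero_iff (hA : IsTotallyPositive A)
    (hB : IsTotallyPositive B) (hC : IsTotallyPositive C) (hρ : Monotone ρ) (hγ : Monotone γ)
    (f : Fin r ↪o m) (g : Fin r ↪o n) :
    ((A * B * diagBlocks ρ γ C).submatrix f g).det = 0 ↔
      ¬ (r ≤ Fintype.card S ∧ ∀ p, #{i | γ (g i) = p} ≤ #{t | ρ t = p}) :=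
  ⟨fun h0 h => (det_submatrix_mul_mul_diagBlocks_pos hA hB hC hρ hγ f g h.1 h.2).ne' h0,
    det_submatrix_mul_mul_diagBlocks_eq_zero A B C hρ hγ f g⟩

theorem det_submatrix_mul_mul_diagBlocks_nonneg (hA : IsTotallyPositive A)
    (hB : IsTotallyPositive B) (hC : IsTotallyPositive C) (hρ : Monotone ρ) (hγ : Monotone γ)
    (f : Fin r ↪o m) (g : Fin r ↪o n) :
    0 ≤ ((A * B * diagBlocks ρ γ C).submatrix f g).det := by
  by_cases h : r ≤ Fintype.card S ∧ ∀ p, #{i | γ (g i) = p} ≤ #{t | ρ t = p}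
  · exact (det_submatrix_mul_mul_diagBlocks_pos hA hB hC hρ hγ f g h.1 h.2).le
  · exact (det_submatrix_mul_mul_diagBlocks_eq_zero A B C hρ hγ f g h).ge

end Product

section Zone

variable {α : Type*} [LinearOrder α]

/-- The monotone labelling that separates the two ends of the interval `[a, b]` from its interior:
for `a ≤ x ≤ b` it is `0` at `a`, `1` strictly between `a` and `b`, and `2` at `b`, where `a` takes
precedence if `a = b`. -/
def zone (a b x : α) : Fin 3 := if x ≤ a then 0 else if x < b then 1 else 2

lemma zone_monotone (a b : α) : Monotone (zone a b) := by
  intro x y hxy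
  unfold zone
  split_ifs <;> first | decide | order

variable {a b x : α}

lemma zone_eq_zero_iff : zone a b x = 0 ↔ x ≤ a := by
  unfold zone
  split_ifs <;> simp_all

lemma zone_eq_one_iff : zone a b x = 1 ↔ a < x ∧ x < b := by
  unfold zone
  split_ifs <;> simp_all

lemma zone_eq_two_iff : zone a b x = 2 ↔ a < x ∧ b ≤ x := by
  unfold zone
  split_ifs <;> simp_all [not_lt_of_ge]

lemma card_filter_between_eq_iff {W : Finset α} (hW : ∀ w ∈ W, a ≤ w ∧ w ≤ b) :
    #{w ∈ W | a < w ∧ w < b} = #W ↔ a ∉ W ∧ b ∉ W := by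
  rw [card_filter_eq_iff]
  constructor
  · exact fun h => ⟨fun ha => (h a ha).1.false, fun hb => (h b hb).2.false⟩
  · rintro ⟨ha, hb⟩ w hw
    exact ⟨(hW w hw).1.lt_of_ne (ne_of_mem_of_not_mem hw ha).symm,
      (hW w hw).2.lt_of_ne (ne_of_mem_of_not_mem hw hb)⟩

lemma card_filter_between_lt_iff {k : ℕ} {W : Finset α}
    (hW : ∀ w ∈ W, a ≤ w ∧ w ≤ b) (hWk : #W ≤ k) :
    #{w ∈ W | a < w ∧ w < b} < k ↔ ¬ (#W = k ∧ a ∉ W ∧ b ∉ W) := by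
  rw [← card_filter_between_eq_iff hW]
  have := card_filter_le W fun w => a < w ∧ w < b
  omega

lemma forall_card_zone_le_iff {k : ℕ} (hk : 1 ≤ k) {W : Finset α}
    (hW : ∀ w ∈ W, a ≤ w ∧ w ≤ b) (hWk : #W ≤ k) :
    (∀ p, #{w ∈ W | zone a b w = p} ≤ #{s : Fin (k + 1) | zone 0 (Fin.last k) s = p}) ↔
      ¬ (#W = k ∧ a ∉ W ∧ b ∉ W) := by
  have hfirst : #{w ∈ W | w ≤ a} ≤ #{s : Fin (k + 1) | s ≤ 0} :=
    calc #{w ∈ W | w ≤ a} ≤ #{a} := card_le_card fun w hw => by grind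
      _ = #{(0 : Fin (k + 1))} := by simp only [card_singleton]
      _ ≤ #{s : Fin (k + 1) | s ≤ 0} := card_le_card (by simp)
  have hlast : #{w ∈ W | a < w ∧ b ≤ w} ≤ #{s : Fin (k + 1) | 0 < s ∧ Fin.last k ≤ s} :=
    calc #{w ∈ W | a < w ∧ b ≤ w} ≤ #{b} := card_le_card fun w hw => by grind
      _ = #{Fin.last k} := by simp only [card_singleton]
      _ ≤ #{s : Fin (k + 1) | 0 < s ∧ Fin.last k ≤ s} := card_le_card <|
        singleton_subset_iff.2 (mem_filter.2 ⟨mem_univ _, Fin.lt_def.2 hk, le_rfl⟩)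
  have hmiddle : #{s : Fin (k + 1) | 0 < s ∧ s < Fin.last k} = k - 1 := by
    rw [filter_lt_lt_eq_Ioo, Fin.card_Ioo, Fin.val_last, Fin.val_zero, Nat.sub_zero]
  rw [← card_filter_between_lt_iff hW hWk, Nat.lt_iff_le_pred hk, ← hmiddle]
  simp only [Fin.forall_fin_succ, Fin.succ_zero_eq_one, Fin.succ_one_eq_two, zone_eq_zero_iff,
    zone_eq_one_iff, zone_eq_two_iff, hfirst, hlast, IsEmpty.forall_iff, and_true, true_and]

lemma card_le_and_forall_card_zone_le_iff {k : ℕ} (hk : 1 ≤ k) {W : Finset α}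
    (hW : ∀ w ∈ W, a ≤ w ∧ w ≤ b) :
    (#W ≤ k ∧
      ∀ p, #{w ∈ W | zone a b w = p} ≤ #{s : Fin (k + 1) | zone 0 (Fin.last k) s = p}) ↔
      ¬ (k + 1 ≤ #W ∨ (#W = k ∧ a ∉ W ∧ b ∉ W)) := by
  rw [not_or, Nat.add_one_le_iff, not_lt]
  exact and_congr_right (forall_card_zone_le_iff hk hW)

end Zone

section Minors

lemma minorN_eq_det_submatrix (M : Matrix ℕ ℕ ℝ) {U W : Finset ℕ} (h : #U = #W) :
    minorN (Matrix.of.symm M) U W =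
      (M.submatrix (U.orderEmbOfFin rfl) (W.orderEmbOfFin h.symm)).det :=
  dif_pos h

lemma minorN_nonneg {M : Matrix ℕ ℕ ℝ}
    (hM : ∀ ⦃r : ℕ⦄ (f g : Fin r ↪o ℕ), 0 ≤ (M.submatrix f g).det) (U W : Finset ℕ) :
    0 ≤ minorN (Matrix.of.symm M) U W := by
  by_cases h : #U = #W
  · exact (hM _ _).trans_eq (minorN_eq_det_submatrix M h).symm
  · rw [minorN, dif_neg h]

lemma card_filter_orderEmbOfFin {α : Type*} [LinearOrder α] {r : ℕ} {W : Finset α} (h : #W = r)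
    (q : α → Prop) [DecidablePred q] : #{i | q (W.orderEmbOfFin h i)} = #{w ∈ W | q w} := by
  conv_rhs => rw [← map_orderEmbOfFin_univ W h, filter_map, card_map]
  rfl

/-- The infinite Hilbert matrix, with entries `1 / (i + j + 1)`. -/
noncomputable def hilbertMatrix : Matrix ℕ ℕ ℝ :=
  cauchyMatrix (fun i => (i : ℝ) + 1) fun j => (j : ℝ)

lemma isTotallyPositive_hilbertMatrix : IsTotallyPositive hilbertMatrix :=
  isTotallyPositive_cauchyMatrix (fun _ _ h => by simpa using h) Nat.strictMono_cast
    fun i j => by positivity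

theorem stmt_7_general (k n : ℕ) (hk : 1 ≤ k) :
    ∃ M : ℕ → ℕ → ℝ,
      (∀ U W : Finset ℕ, 0 ≤ minorN M U W) ∧
      ∀ U W : Finset ℕ, W ⊆ Icc 1 n → #U = #W →
        (minorN M U W = 0 ↔ k + 1 ≤ #U ∨ (#U = k ∧ 1 ∉ W ∧ n ∉ W)) := by
  let A : Matrix ℕ (Fin k) ℝ := hilbertMatrix.submatrix id Fin.val
  let B : Matrix (Fin k) (Fin (k + 1)) ℝ := hilbertMatrix.submatrix Fin.val Fin.val
  let C : Matrix (Fin (k + 1)) ℕ ℝ := hilbertMatrix.submatrix Fin.val id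
  have hH := isTotallyPositive_hilbertMatrix
  have hA : IsTotallyPositive A := hH.submatrix (.refl _) (Fin.valOrderEmb k)
  have hB : IsTotallyPositive B := hH.submatrix (Fin.valOrderEmb k) (Fin.valOrderEmb (k + 1))
  have hC : IsTotallyPositive C := hH.submatrix (Fin.valOrderEmb (k + 1)) (.refl _)
  have hρ := zone_monotone 0 (Fin.last k)
  have hγ := zone_monotone 1 n
  refine ⟨Matrix.of.symm (A * B * diagBlocks (zone 0 (Fin.last k)) (zone 1 n) C),
    minorN_nonneg fun _ => det_submatrix_mul_mul_diagBlocks_nonneg hA hB hC hρ hγ,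
    fun U W hW hUW => ?_⟩
  have hWbounds : ∀ w ∈ W, 1 ≤ w ∧ w ≤ n := fun w hw => mem_Icc.1 (hW hw)
  have hcount (p : Fin 3) :
      #{i | zone 1 n (W.orderEmbOfFin hUW.symm i) = p} = #{w ∈ W | zone 1 n w = p} :=
    card_filter_orderEmbOfFin hUW.symm (zone 1 n · = p)
  rw [minorN_eq_det_submatrix _ hUW,
    det_submatrix_mul_mul_diagBlocks_eq_zero_iff hA hB hC hρ hγ]
  simp only [hcount, Fintype.card_fin]
  rw [hUW, card_le_and_forall_card_zone_le_iff hk hWbounds, not_not]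

end Minors

/-- for every `k ≥ 2` there is a totally nonnegative `(2k-1) × (2k-1)` matrix
(1-indexed) whose minor on rows `U`, columns `W` (with `|U| = |W| = r`) vanishes exactly
when `r ≥ k+1`, or `r = k` and `1 ∉ W` and `2k-1 ∉ W`; all other minors are strictly
positive. -/
theorem stmt_7 (k : ℕ) (hk : 2 ≤ k) :
    ∃ M : ℕ → ℕ → ℝ,
      (∀ U W : Finset ℕ, U ⊆ Finset.Icc 1 (2 * k - 1) → W ⊆ Finset.Icc 1 (2 * k - 1) →
        0 ≤ minorN M U W) ∧
      (∀ U W : Finset ℕ, U ⊆ Finset.Icc 1 (2 * k - 1) → W ⊆ Finset.Icc 1 (2 * k - 1) →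
        U.card = W.card → 1 ≤ U.card →
        (minorN M U W = 0 ↔
          (k + 1 ≤ U.card ∨ (U.card = k ∧ 1 ∉ W ∧ 2 * k - 1 ∉ W))) ∧
        (¬(k + 1 ≤ U.card ∨ (U.card = k ∧ 1 ∉ W ∧ 2 * k - 1 ∉ W)) →
          0 < minorN M U W)) := by
  obtain ⟨M, hnonneg, hzero⟩ := stmt_7_general k (2 * k - 1) (by omega)
  exact ⟨M, fun U W _ _ => hnonneg U W, fun U W _ hW hUW _ => ⟨hzero U W hW hUW,
    fun h => (hnonneg U W).lt_of_ne' (mt (hzero U W hW hUW).1 h)⟩⟩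
end

section
/- Let X = (x_{ij}) be an m×n matrix with positive real entries and let ȳ_{i,j,k} be the associated noncrossing-lattice-path generating sums. Then for all 2 ≤ i ≤ m, 2 ≤ j ≤ n and 1 ≤ k ≤ min(i,j) − 1: ȳ_{i,j,k} · ȳ_{i−1,j−1,k−1} = x_{ij} · ( ȳ_{i−1,j,k} · ȳ_{i,j−1,k−1} + ȳ_{i−1,j,k−1} · ȳ_{i,j−1,k} ). -/
/-- One step of a lattice path: exactly one coordinate increases by exactly `1`. -/
def GridStep (u v : ℕ × ℕ) : Prop := v = (u.1 + 1, u.2) ∨ v = (u.1, u.2 + 1)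

/-- `p` is a lattice path in `{1,…,m} × {1,…,n}` from `src` to `tgt`. -/
def IsGridPath (m n : ℕ) (src tgt : ℕ × ℕ) (p : List (ℕ × ℕ)) : Prop :=
  p.head? = some src ∧ p.getLast? = some tgt ∧
  (∀ v ∈ p, 1 ≤ v.1 ∧ v.1 ≤ m ∧ 1 ≤ v.2 ∧ v.2 ≤ n) ∧
  List.Chain' GridStep p

/-- A tuple of pairwise vertex-disjoint lattice paths in `{1,…,m} × {1,…,n}`, the `l`-th one
going from the `l`-th entry of `src` to the `l`-th entry of `tgt`. -/
structure NCTuple (m n : ℕ) (src tgt : List (ℕ × ℕ)) where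
  path : List (List (ℕ × ℕ))
  hlen : path.length = src.length
  hlen' : path.length = tgt.length
  valid : ∀ l, l < path.length →
    IsGridPath m n (src.getD l (0, 0)) (tgt.getD l (0, 0)) (path.getD l [])
  disj : ∀ l l', l < path.length → l' < path.length → l ≠ l' →
    ∀ v ∈ path.getD l [], v ∉ path.getD l' []

/-- `ȳ_{i,j,k}`: the sum over all `k`-tuples `(π_1,…,π_k)` of pairwise vertex-disjoint
lattice paths, with `π_l` going from `(1,l)` to `(i, j-k+l)`, of
`Π_l Π_{(r,s) ∈ π_l} x_{r,s}`. -/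
noncomputable def ybar (m n : ℕ) (x : ℕ → ℕ → ℝ) (i j k : ℕ) : ℝ :=
  ∑ᶠ T : NCTuple m n ((List.range k).map fun l => (1, l + 1))
      ((List.range k).map fun l => (i, j - k + (l + 1))),
    (T.path.map fun p => (p.map fun v => x v.1 v.2).prod).prod

/-!
By the Lindström–Gessel–Viennot lemma, `ȳ_{i,j,k}` is the minor of the matrix of single-path sums
`g_i(c, a)` from `(1, a)` to `(i, c)` with rows `c = j - k + 1, …, j` and columns `a = 1, …, k`.
The lemma follows by induction on the sinks: a sink that is maximal for the componentwise order lies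
on no other path of a disjoint family, so removing it from the end of its path gives the same
recurrence for the disjoint families as row linearity gives for the determinant.

Since `g_i(c + 1, ·) = x_{i,c+1} (g_{i-1}(c + 1, ·) + g_i(c, ·))`, row operations turn a minor of
`g_i` into a product of entries of `x` times a minor of `g_{i-1}` with its first row taken
from `g_i`. In these terms the claim is a three-term Plücker relation, which is Cramer's rule.
-/

section ConsecutiveBlock

open Matrix

variable {α : Type*}

/-- The `k × k` block of the infinite matrix `w` in rows `s, …, s + k - 1` and columns
`0, …, k - 1`. Its determinants are the minors by which the path sums `ȳ` are expressed. -/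
def consecutiveBlock (w : ℕ → ℕ → α) (s k : ℕ) : Matrix (Fin k) (Fin k) α :=
  of fun b a ↦ w (s + b) a

theorem consecutiveBlock_update (w : ℕ → ℕ → α) (a : ℕ → α) (s k : ℕ) :
    consecutiveBlock (Function.update w s a) s (k + 1) =
      (consecutiveBlock w s (k + 1)).updateRow 0 (fun c ↦ a c) := by
  ext b c
  simp [consecutiveBlock, updateRow_apply, Function.update_apply,
    apply_ite (fun f : ℕ → α ↦ f c)]

theorem consecutiveBlock_submatrix_castSucc (w : ℕ → ℕ → α) (s k : ℕ) :
    (consecutiveBlock w s (k + 1)).submatrix Fin.castSucc Fin.castSucc = consecutiveBlock w s k :=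
  rfl

theorem consecutiveBlock_updateRow_last (w : ℕ → ℕ → α) (s k : ℕ) :
    (consecutiveBlock w s (k + 1)).updateRow (Fin.last k) (fun c ↦ w (s + k) c) =
      consecutiveBlock w s (k + 1) :=
  updateRow_eq_self _ _

theorem consecutiveBlock_update_submatrix_finRotate (w : ℕ → ℕ → α) (a : ℕ → α) (s k : ℕ) :
    (consecutiveBlock (Function.update w s a) s (k + 1)).submatrix (finRotate (k + 1)) id =
      (consecutiveBlock w (s + 1) (k + 1)).updateRow (Fin.last k) (fun c ↦ a c) := by
  ext b c
  induction b using Fin.lastCases with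
  | last => simp [consecutiveBlock]
  | cast b => simp [consecutiveBlock, Function.update_apply, add_assoc, add_comm 1]

end ConsecutiveBlock

section Determinants

open Matrix

variable {ι R : Type*} [Fintype ι] [DecidableEq ι] [CommRing R]

theorem sum_det_updateRow_mul_det_updateRow (A B : Matrix ι ι R) (i : ι) (c : ι → R) :
    ∑ l, (A.updateRow l c).det * (B.updateRow i (A l)).det = A.det * (B.updateRow i c).det := by
  have cramer_expansion : ∑ l, (A.updateRow l c).det • A l = A.det • c := by
    simpa only [mulVec_eq_sum, cramer_transpose_apply, op_smul_eq_smul, transpose_transpose,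
      det_transpose] using mulVec_cramer Aᵀ c
  let detRow := (detRowAlternating (n := ι) (R := R)).toMultilinearMap.toLinearMap B i
  have expand := congrArg detRow cramer_expansion
  simp only [map_sum, map_smul, smul_eq_mul] at expand
  exact expand

theorem det_updateRow_mul_det_updateRow_three_term (A : Matrix ι ι R) {i j : ι} (hij : i ≠ j)
    (a b c e : ι → R) :
    ((A.updateRow i a).updateRow j b).det * ((A.updateRow i c).updateRow j e).det =
      ((A.updateRow i c).updateRow j b).det * ((A.updateRow i a).updateRow j e).det +
        ((A.updateRow i a).updateRow j c).det * ((A.updateRow i b).updateRow j e).det := by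
  have other_terms_vanish (l : ι) (hl : l ≠ i ∧ l ≠ j) :
      ((A.updateRow j e).updateRow i (((A.updateRow i a).updateRow j b) l)).det = 0 :=
    det_zero_of_row_eq hl.1.symm <| by ext; simp [updateRow_apply, hl.1, hl.2]
  have exchange := sum_det_updateRow_mul_det_updateRow ((A.updateRow i a).updateRow j b)
    (A.updateRow j e) i c
  rw [Finset.sum_eq_add i j hij (fun l _ hl ↦ by rw [other_terms_vanish l hl, mul_zero])
    (by simp) (by simp)] at exchange
  simpa only [updateRow_self, updateRow_ne hij, updateRow_idem, updateRow_comm A hij.symm,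
    updateRow_comm (A.updateRow i a) hij.symm] using exchange.symm

theorem det_submatrix_finRotate {q : ℕ} (A : Matrix (Fin (q + 1)) (Fin (q + 1)) R) :
    (A.submatrix (finRotate (q + 1)) id).det = (-1) ^ q * A.det := by
  rw [det_permute, sign_finRotate]
  simp

theorem det_updateRow_last_single {q : ℕ} (A : Matrix (Fin (q + 1)) (Fin (q + 1)) R) :
    (A.updateRow (Fin.last q) (Pi.single (Fin.last q) 1)).det =
      (A.submatrix Fin.castSucc Fin.castSucc).det := by
  rw [← adjugate_apply, adjugate_fin_succ_eq_det_submatrix, Fin.succAbove_last]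
  simp [← two_mul]

theorem det_consecutiveBlock_three_term (u : ℕ → ℕ → R) (a : ℕ → R) (s q : ℕ) :
    (consecutiveBlock (Function.update u (s + 1) a) (s + 1) (q + 2)).det *
        (consecutiveBlock u (s + 1) (q + 1)).det =
      (consecutiveBlock u (s + 1) (q + 2)).det *
          (consecutiveBlock (Function.update u (s + 1) a) (s + 1) (q + 1)).det +
        (consecutiveBlock u (s + 2) (q + 1)).det *
          (consecutiveBlock (Function.update u s a) s (q + 2)).det := by
  let lastRow : ℕ → R := u (s + 2 + q)
  have updateRow_last (p : ℕ → R) :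
      (consecutiveBlock (Function.update u (s + 1) p) (s + 1) (q + 2)).updateRow (Fin.last _)
        (fun c ↦ lastRow c) = consecutiveBlock (Function.update u (s + 1) p) (s + 1) (q + 2) := by
    have lastRow_eq : lastRow = Function.update u (s + 1) p (s + 1 + (q + 1)) := by
      rw [Function.update_of_ne (by lia), ← add_assoc, add_right_comm]
    rw [lastRow_eq, consecutiveBlock_updateRow_last]
  have rotate_last : (consecutiveBlock u (s + 2) (q + 1)).det = (-1) ^ q *
      (consecutiveBlock (Function.update u (s + 1) lastRow) (s + 1) (q + 1)).det := by
    rw [← det_submatrix_finRotate, consecutiveBlock_update_submatrix_finRotate,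
      consecutiveBlock_updateRow_last]
  have rotate_new : ((consecutiveBlock u (s + 1) (q + 2)).updateRow (Fin.last _) fun c ↦ a c).det =
      (-1) ^ (q + 1) * (consecutiveBlock (Function.update u s a) s (q + 2)).det := by
    rw [← det_submatrix_finRotate, consecutiveBlock_update_submatrix_finRotate]
  -- Taking a unit vector as the fourth row cuts two of the minors down to size `q + 1`.
  have plucker := det_updateRow_mul_det_updateRow_three_term (consecutiveBlock u (s + 1) (q + 2))
    (i := 0) (j := Fin.last (q + 1)) (by simp) (fun c ↦ u (s + 1) c) (fun c ↦ lastRow c)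
    (fun c ↦ a c) (Pi.single (Fin.last _) 1)
  simp only [det_updateRow_last_single, ← consecutiveBlock_update, updateRow_last,
    consecutiveBlock_submatrix_castSucc] at plucker
  rw [Function.update_eq_self, rotate_new] at plucker
  rw [rotate_last]
  linear_combination -plucker

theorem det_consecutiveBlock_eq_prod_mul {u v : ℕ → ℕ → R} {y : ℕ → R}
    (hv : ∀ c, v (c + 1) = y (c + 1) • (u (c + 1) + v c)) (s k : ℕ) :
    (consecutiveBlock v s (k + 1)).det = (∏ b ∈ Finset.range k, y (s + 1 + b)) *
      (consecutiveBlock (Function.update u s (v s)) s (k + 1)).det := by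
  have scale_rows := det_mul_column (Fin.cons 1 fun b : Fin k ↦ y (s + 1 + b))
    (consecutiveBlock (Function.update u s (v s)) s (k + 1))
  rw [Fin.prod_univ_succ] at scale_rows
  simp only [Fin.cons_zero, Fin.cons_succ, one_mul] at scale_rows
  rw [Finset.prod_range, ← scale_rows]
  refine det_eq_of_forall_row_eq_smul_add_pred (fun b : Fin k ↦ y (s + 1 + b))
    (by simp [consecutiveBlock]) fun b a ↦ ?_
  simp only [consecutiveBlock, of_apply, Fin.val_succ, Fin.val_castSucc, ← add_assoc,
    add_right_comm s 1, hv, Pi.smul_apply, Pi.add_apply, smul_eq_mul, Function.update_apply,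
    Nat.add_eq_left, Fin.val_eq_zero_iff, Fin.succ_ne_zero, Fin.cons_succ, ↓reduceIte]
  ring

theorem det_consecutiveBlock_update_succ {u v : ℕ → ℕ → R} {y : ℕ → R}
    (hv : ∀ c, v (c + 1) = y (c + 1) • (u (c + 1) + v c)) (s q : ℕ) :
    (consecutiveBlock (Function.update u s (v (s + 1))) s (q + 2)).det =
      y (s + 1) * (consecutiveBlock (Function.update u s (v s)) s (q + 2)).det := by
  simp only [consecutiveBlock_update]
  have row_recurrence : (fun c : Fin (q + 2) ↦ v (s + 1) c) =
      y (s + 1) • ((fun c : Fin (q + 2) ↦ u (s + 1) c) + fun c : Fin (q + 2) ↦ v s c) := by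
    rw [hv]
    rfl
  have repeated_row :
      ((consecutiveBlock u s (q + 2)).updateRow 0 fun c ↦ u (s + 1) c).det = 0 :=
    det_zero_of_row_eq zero_ne_one <| by ext; simp [consecutiveBlock]
  rw [row_recurrence, det_updateRow_smul, det_updateRow_add, repeated_row, zero_add]

theorem det_consecutiveBlock_mul_det_consecutiveBlock {u v : ℕ → ℕ → R} {y : ℕ → R}
    (hv : ∀ c, v (c + 1) = y (c + 1) • (u (c + 1) + v c)) (s k : ℕ) :
    (consecutiveBlock v (s + 1) (k + 1)).det * (consecutiveBlock u (s + 1) k).det =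
      y (s + k + 1) *
        ((consecutiveBlock u (s + 1) (k + 1)).det * (consecutiveBlock v (s + 1) k).det +
          (consecutiveBlock u (s + 2) k).det * (consecutiveBlock v s (k + 1)).det) := by
  cases k with
  | zero => simp [consecutiveBlock, hv]
  | succ q =>
    have plucker := det_consecutiveBlock_three_term u (v (s + 1)) s q
    rw [det_consecutiveBlock_update_succ hv] at plucker
    rw [det_consecutiveBlock_eq_prod_mul hv (s + 1) (q + 1),
      det_consecutiveBlock_eq_prod_mul hv (s + 1) q, det_consecutiveBlock_eq_prod_mul hv s (q + 1),
      Finset.prod_range_succ, Finset.prod_range_succ']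
    simp only [add_zero, ← add_assoc, add_right_comm _ 1] at plucker ⊢
    linear_combination (∏ b ∈ Finset.range q, y (s + b + 1 + 1)) * y (s + q + 1 + 1) * plucker

end Determinants

section GridPaths

/-- The vertex sequences of the lattice paths from `(1, a)` to `(r, c)`. Every path is entered from
a virtual source `(0, a)` that is not recorded, so that a path to `(0, a)` is the empty list and
no other point of row `0` is reached. -/
def gridPaths (a : ℕ) : ℕ → ℕ → Finset (List (ℕ × ℕ))
  | 0, c => if c = a then {[]} else ∅
  | _ + 1, 0 => ∅
  | r + 1, c + 1 =>
    (gridPaths a r (c + 1) ∪ gridPaths a (r + 1) c).image (· ++ [(r + 1, c + 1)])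

variable {a r c r' c' : ℕ} {p : List (ℕ × ℕ)}

theorem mem_gridPaths_zero : p ∈ gridPaths a 0 c ↔ c = a ∧ p = [] := by
  rw [gridPaths]
  split_ifs with h <;> simp [h]

theorem gridPaths_succ_zero : gridPaths a (r + 1) 0 = ∅ := by
  rw [gridPaths]

theorem mem_gridPaths_succ_succ : p ∈ gridPaths a (r + 1) (c + 1) ↔
    ∃ q, (q ∈ gridPaths a r (c + 1) ∨ q ∈ gridPaths a (r + 1) c) ∧ q ++ [(r + 1, c + 1)] = p := by
  rw [gridPaths]
  simp only [Finset.mem_image, Finset.mem_union]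

theorem append_singleton_mem_gridPaths_succ_succ {v : ℕ × ℕ} :
    p ++ [v] ∈ gridPaths a (r + 1) (c + 1) ↔
      v = (r + 1, c + 1) ∧ (p ∈ gridPaths a r (c + 1) ∨ p ∈ gridPaths a (r + 1) c) := by
  rw [mem_gridPaths_succ_succ]
  constructor
  · rintro ⟨q, hq, h⟩
    obtain ⟨rfl, hv⟩ := List.append_inj' h rfl
    exact ⟨(List.singleton_inj.1 hv).symm, hq⟩
  · rintro ⟨rfl, hp⟩
    exact ⟨p, hp, rfl⟩

theorem getLastD_of_mem_gridPaths (hp : p ∈ gridPaths a r c) : p.getLastD (0, a) = (r, c) := by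
  cases r with
  | zero =>
    obtain ⟨rfl, rfl⟩ := mem_gridPaths_zero.1 hp
    rfl
  | succ r =>
    cases c with
    | zero => simp [gridPaths_succ_zero] at hp
    | succ c =>
      obtain ⟨q, -, rfl⟩ := mem_gridPaths_succ_succ.1 hp
      simp

theorem ne_nil_of_mem_gridPaths_succ (hp : p ∈ gridPaths a (r + 1) c) : p ≠ [] := by
  rintro rfl
  simpa using getLastD_of_mem_gridPaths hp

theorem nil_mem_gridPaths_iff : [] ∈ gridPaths a r c ↔ r = 0 ∧ c = a := by
  cases r with
  | zero => simp [mem_gridPaths_zero]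
  | succ r => simpa using fun h ↦ ne_nil_of_mem_gridPaths_succ h rfl

theorem mem_of_mem_gridPaths_succ (hp : p ∈ gridPaths a (r + 1) c) : (r + 1, c) ∈ p := by
  have hne := ne_nil_of_mem_gridPaths_succ hp
  have := getLastD_of_mem_gridPaths hp
  rw [List.getLastD_eq_getLast?, List.getLast?_eq_some_getLast hne, Option.getD_some] at this
  exact this ▸ List.getLast_mem hne

theorem disjoint_gridPaths (h : (r, c) ≠ (r', c')) :
    Disjoint (gridPaths a r c) (gridPaths a r' c') :=
  Finset.disjoint_left.2 fun _ hp hp' ↦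
    h <| (getLastD_of_mem_gridPaths hp).symm.trans (getLastD_of_mem_gridPaths hp')

theorem le_of_mem_of_mem_gridPaths {v : ℕ × ℕ} (hp : p ∈ gridPaths a r c) (hv : v ∈ p) :
    v ≤ (r, c) := by
  induction r generalizing c p with
  | zero => simp [(mem_gridPaths_zero.1 hp).2] at hv
  | succ r ih_row =>
    induction c generalizing p with
    | zero => simp [gridPaths_succ_zero] at hp
    | succ c ih_col =>
      obtain ⟨q, hq, rfl⟩ := mem_gridPaths_succ_succ.1 hp
      rcases List.mem_append.1 hv with hvq | hv
      · rcases hq with hq | hq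
        · exact (ih_row hq hvq).trans (by simp)
        · exact (ih_col hq hvq).trans (by simp)
      · exact (List.mem_singleton.1 hv).le

end GridPaths

section IsGridPath

variable {m n a r c : ℕ} {src tgt v : ℕ × ℕ} {p q : List (ℕ × ℕ)}

theorem isGridPath_iff : IsGridPath m n src tgt p ↔
    p.head? = some src ∧ p.getLast? = some tgt ∧ (∀ v ∈ p, v ∈ Set.Icc (1, 1) (m, n)) ∧
      p.IsChain GridStep := by
  simp only [Set.mem_Icc, Prod.le_def]
  exact and_congr_right fun _ ↦ and_congr_right fun _ ↦ and_congr_left fun _ ↦ by grind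

theorem isGridPath_singleton :
    IsGridPath m n src tgt [v] ↔ v = src ∧ v = tgt ∧ v ∈ Set.Icc (1, 1) (m, n) := by
  simp [isGridPath_iff]

theorem isGridPath_append_singleton (hq : q ≠ []) : IsGridPath m n src tgt (q ++ [v]) ↔
    v = tgt ∧ v ∈ Set.Icc (1, 1) (m, n) ∧ ∃ w, GridStep w v ∧ IsGridPath m n src w q := by
  have head_eq : (q ++ [v]).head? = q.head? := List.head?_append_of_ne_nil _ hq
  have last_eq : q.getLast? = some (q.getLast hq) := List.getLast?_eq_some_getLast hq
  simp only [isGridPath_iff, head_eq, List.getLast?_concat, List.isChain_append, List.mem_append,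
    last_eq]
  grind

theorem IsGridPath.tgt_mem_Icc (h : IsGridPath m n src tgt p) : tgt ∈ Set.Icc (1, 1) (m, n) := by
  obtain ⟨-, hlast, hbox, -⟩ := isGridPath_iff.1 h
  exact hbox tgt (List.mem_of_getLast? hlast)

theorem gridStep_succ_succ_iff : GridStep v (r + 1, c + 1) ↔ v = (r, c + 1) ∨ v = (r + 1, c) := by
  simp only [GridStep, Prod.ext_iff]
  lia

theorem isGridPath_iff_mem_gridPaths_of_ne_nil (hrm : r ≤ m) (hcn : c ≤ n) (hp : p ≠ []) :
    IsGridPath m n (1, a) (r, c) p ↔ p ∈ gridPaths a r c := by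
  induction r generalizing c p with
  | zero =>
    exact iff_of_false (fun h ↦ by simpa using h.tgt_mem_Icc) fun h ↦ hp (mem_gridPaths_zero.1 h).2
  | succ r ih_row =>
    induction c generalizing p with
    | zero =>
      exact iff_of_false (fun h ↦ by simpa using h.tgt_mem_Icc) (by simp [gridPaths_succ_zero])
    | succ c ih_col =>
      obtain ⟨q, v, rfl⟩ := p.eq_nil_or_concat'.resolve_left hp
      have in_box : (r + 1, c + 1) ∈ Set.Icc (1, 1) (m, n) := by simp [Prod.le_def, hrm, hcn]
      rw [append_singleton_mem_gridPaths_succ_succ]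
      rcases eq_or_ne q [] with rfl | hq
      · rw [List.nil_append, isGridPath_singleton, and_left_comm]
        refine and_congr_right ?_
        rintro rfl
        simp [in_box, nil_mem_gridPaths_iff]
      · rw [isGridPath_append_singleton hq, ← ih_row (by lia) hcn hq, ← ih_col (by lia) hq]
        refine and_congr_right ?_
        rintro rfl
        simp [in_box, gridStep_succ_succ_iff]

theorem isGridPath_iff_mem_gridPaths (hr : 1 ≤ r) (hrm : r ≤ m) (hcn : c ≤ n) :
    IsGridPath m n (1, a) (r, c) p ↔ p ∈ gridPaths a r c := by
  obtain ⟨r, rfl⟩ := Nat.exists_eq_add_of_le' hr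
  rcases eq_or_ne p [] with rfl | hp
  · exact iff_of_false (by simp [isGridPath_iff]) fun h ↦ ne_nil_of_mem_gridPaths_succ h rfl
  · exact isGridPath_iff_mem_gridPaths_of_ne_nil hrm hcn hp

end IsGridPath

section PathSum

variable {R : Type*} [CommSemiring R] (x : ℕ → ℕ → R) {a : ℕ}

/-- The weight of a path: the product of the entries of `x` at its vertices. -/
def pathWeight (p : List (ℕ × ℕ)) : R :=
  (p.map fun v ↦ x v.1 v.2).prod

/-- The sum of the weights of all lattice paths from `(1, a)` to `(r, c)`. -/
def pathSum (a r c : ℕ) : R :=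
  ∑ p ∈ gridPaths a r c, pathWeight x p

theorem pathWeight_append_singleton (p : List (ℕ × ℕ)) (v : ℕ × ℕ) :
    pathWeight x (p ++ [v]) = x v.1 v.2 * pathWeight x p := by
  simp [pathWeight, mul_comm]

theorem pathSum_zero (c : ℕ) : pathSum x a 0 c = if c = a then 1 else 0 := by
  rw [pathSum, gridPaths]
  split_ifs <;> simp [pathWeight]

theorem pathSum_succ_succ (r c : ℕ) : pathSum x a (r + 1) (c + 1) =
    x (r + 1) (c + 1) * (pathSum x a r (c + 1) + pathSum x a (r + 1) c) := by
  rw [pathSum, gridPaths, Finset.sum_image (List.append_left_injective _).injOn,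
    Finset.sum_union (disjoint_gridPaths (by simp)), mul_add]
  simp only [pathWeight_append_singleton, pathSum, Finset.mul_sum]

end PathSum

section AppendAt

variable {ι : Type*} [DecidableEq ι] {l : ι} {p : ι → List (ℕ × ℕ)}

/-- Extends the `l`-th path of a family by the vertex `v`. -/
def appendAt (l : ι) (v : ℕ × ℕ) (p : ι → List (ℕ × ℕ)) : ι → List (ℕ × ℕ) :=
  Function.update p l (p l ++ [v])

theorem appendAt_injective (l : ι) (v : ℕ × ℕ) : (appendAt l v).Injective := by
  intro p q h
  funext b
  have hb := congrFun h b
  rcases eq_or_ne b l with rfl | hbl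
  · simpa [appendAt] using hb
  · simpa [appendAt, hbl] using hb

theorem pairwise_disjoint_appendAt_iff {v : ℕ × ℕ} (hv : ∀ b ≠ l, v ∉ p b) :
    (Pairwise fun b b' ↦ (appendAt l v p b).Disjoint (appendAt l v p b')) ↔
      Pairwise fun b b' ↦ (p b).Disjoint (p b') := by
  refine forall₃_congr fun b b' hbb' ↦ ?_
  rcases eq_or_ne b l with rfl | hb
  · simp [appendAt, hbb'.symm, hv]
  · rcases eq_or_ne b' l with rfl | hb'
    · simp [appendAt, hb, hv]
    · simp [appendAt, hb, hb']

end AppendAt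

section DisjointPathFamilies

variable {ι : Type*} [Fintype ι] [DecidableEq ι] {s : ι → ℕ} {t : ι → ℕ × ℕ} {l : ι} {r c : ℕ}
  {p : ι → List (ℕ × ℕ)}

open Classical in
/-- The families of pairwise vertex-disjoint lattice paths, the `l`-th one from `(1, s l)` to
`t l`. -/
noncomputable def disjointPathFamilies (s : ι → ℕ) (t : ι → ℕ × ℕ) :
    Finset (ι → List (ℕ × ℕ)) :=
  {p ∈ Fintype.piFinset fun l ↦ gridPaths (s l) (t l).1 (t l).2 |
    Pairwise fun l l' ↦ (p l).Disjoint (p l')}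

theorem mem_disjointPathFamilies : p ∈ disjointPathFamilies s t ↔
    (∀ l, p l ∈ gridPaths (s l) (t l).1 (t l).2) ∧ Pairwise fun l l' ↦ (p l).Disjoint (p l') := by
  simp [disjointPathFamilies]

theorem disjointPathFamilies_eq_empty_of_gridPaths_eq_empty
    (h : gridPaths (s l) (t l).1 (t l).2 = ∅) : disjointPathFamilies s t = ∅ :=
  Finset.eq_empty_of_forall_notMem fun p hp ↦ by
    simpa [h] using (mem_disjointPathFamilies.1 hp).1 l

theorem disjointPathFamilies_eq_empty_of_not_injective (hs : s.Injective) (ht : ¬ t.Injective) :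
    disjointPathFamilies s t = ∅ := by
  refine Finset.eq_empty_of_forall_notMem fun p hp ↦ ht fun l l' hll' ↦ ?_
  obtain ⟨hpath, hdisj⟩ := mem_disjointPathFamilies.1 hp
  by_contra hne
  have hl := hpath l
  have hl' := hpath l'
  rw [← hll'] at hl'
  cases hrow : (t l).1 with
  | zero =>
    rw [hrow] at hl hl'
    exact hne (hs ((mem_gridPaths_zero.1 hl).1.symm.trans (mem_gridPaths_zero.1 hl').1))
  | succ r =>
    rw [hrow] at hl hl'
    exact hdisj hne (mem_of_mem_gridPaths_succ hl) (mem_of_mem_gridPaths_succ hl')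

theorem disjoint_disjointPathFamilies {t' : ι → ℕ × ℕ} (h : t ≠ t') :
    Disjoint (disjointPathFamilies s t) (disjointPathFamilies s t') := by
  refine Finset.disjoint_left.2 fun p hp hp' ↦ h (funext fun l ↦ ?_)
  exact (getLastD_of_mem_gridPaths ((mem_disjointPathFamilies.1 hp).1 l)).symm.trans
    (getLastD_of_mem_gridPaths ((mem_disjointPathFamilies.1 hp').1 l))

theorem mem_disjointPathFamilies_update {v : ℕ × ℕ} :
    p ∈ disjointPathFamilies s (Function.update t l v) ↔
      p l ∈ gridPaths (s l) v.1 v.2 ∧ (∀ b ≠ l, p b ∈ gridPaths (s b) (t b).1 (t b).2) ∧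
        Pairwise fun b b' ↦ (p b).Disjoint (p b') := by
  rw [mem_disjointPathFamilies, ← and_assoc]
  refine and_congr_left fun _ ↦ ?_
  rw [Function.forall_update_iff t fun b w ↦ p b ∈ gridPaths (s b) w.1 w.2]

theorem appendAt_mem_disjointPathFamilies (hl : t l = (r + 1, c + 1))
    (hmax : ∀ b, t l ≤ t b → b = l) :
    appendAt l (r + 1, c + 1) p ∈ disjointPathFamilies s t ↔
      p ∈ disjointPathFamilies s (Function.update t l (r, c + 1)) ∨
        p ∈ disjointPathFamilies s (Function.update t l (r + 1, c)) := by
  have not_mem (hp : ∀ b ≠ l, p b ∈ gridPaths (s b) (t b).1 (t b).2) :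
      ∀ b ≠ l, (r + 1, c + 1) ∉ p b :=
    fun b hb h ↦ hb <| hmax b (hl ▸ le_of_mem_of_mem_gridPaths (hp b hb) h)
  have appendAt_of_ne {b : ι} (hb : b ≠ l) : appendAt l (r + 1, c + 1) p b = p b :=
    Function.update_of_ne hb _ _
  have appendAt_self : appendAt l (r + 1, c + 1) p l = p l ++ [(r + 1, c + 1)] :=
    Function.update_self ..
  rw [← Function.update_eq_self l t, hl]
  simp only [Function.update_idem, mem_disjointPathFamilies_update, ← or_and_right,
    appendAt_self, append_singleton_mem_gridPaths_succ_succ, true_and]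
  refine and_congr_right fun _ ↦ ?_
  rw [forall₂_congr fun b hb ↦ by rw [appendAt_of_ne hb]]
  exact and_congr_right fun hp ↦ pairwise_disjoint_appendAt_iff (not_mem hp)

theorem disjointPathFamilies_eq_image_appendAt (hl : t l = (r + 1, c + 1))
    (hmax : ∀ b, t l ≤ t b → b = l) :
    disjointPathFamilies s t = (disjointPathFamilies s (Function.update t l (r, c + 1)) ∪
      disjointPathFamilies s (Function.update t l (r + 1, c))).image
        (appendAt l (r + 1, c + 1)) := by
  ext p
  simp only [Finset.mem_image, Finset.mem_union, ← appendAt_mem_disjointPathFamilies hl hmax]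
  refine ⟨fun hp ↦ ?_, by rintro ⟨q, hq, rfl⟩; exact hq⟩
  have hpl := (mem_disjointPathFamilies.1 hp).1 l
  rw [hl] at hpl
  obtain ⟨q, -, hq⟩ := mem_gridPaths_succ_succ.1 hpl
  have hpq : appendAt l (r + 1, c + 1) (Function.update p l q) = p := by simp [appendAt, hq]
  exact ⟨_, hpq.symm ▸ hp, hpq⟩

end DisjointPathFamilies

section Sinks

variable {ι : Type*} {t : ι → ℕ × ℕ} {l : ι} {r c : ℕ}

/-- The sinks run weakly north-east, the first coordinate being the row index of a matrix. -/
def IsNortheast [Preorder ι] (t : ι → ℕ × ℕ) : Prop :=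
  ∀ ⦃l l'⦄, l < l' → (t l').1 ≤ (t l).1 ∧ (t l).2 ≤ (t l').2

theorem exists_maximal_sink [Finite ι] (ht : t.Injective) (hrow : (t l).1 ≠ 0) :
    ∃ l, (t l).1 ≠ 0 ∧ ∀ b, t l ≤ t b → b = l := by
  obtain ⟨l, hl, hmax⟩ := Set.Finite.exists_maximalFor t
    {l | (t l).1 ≠ 0} (Set.toFinite _) ⟨l, hrow⟩
  refine ⟨l, hl, fun b hb ↦ ht (le_antisymm (hmax ?_ hb) hb)⟩
  exact ((Nat.pos_of_ne_zero hl).trans_le hb.1).ne'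

variable [Preorder ι] [DecidableEq ι]

theorem IsNortheast.update_pred_row (ht : IsNortheast t) (hl : t l = (r + 1, c + 1))
    (hmax : ∀ b, t l ≤ t b → b = l) : IsNortheast (Function.update t l (r, c + 1)) := by
  intro b b' hbb'
  have hbb'_order := ht hbb'
  rcases eq_or_ne b l with rfl | hb
  · have not_ge : ¬ t b ≤ t b' := fun h ↦ hbb'.ne' (hmax b' h)
    simp only [hl, Prod.le_def, Function.update_self, Function.update_of_ne hbb'.ne']
      at hbb'_order not_ge ⊢
    lia
  · rcases eq_or_ne b' l with rfl | hb'
    · simp only [hl, Function.update_self, Function.update_of_ne hb] at hbb'_order ⊢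
      lia
    · simpa only [Function.update_of_ne hb, Function.update_of_ne hb'] using hbb'_order

theorem IsNortheast.update_pred_col (ht : IsNortheast t) (hl : t l = (r + 1, c + 1))
    (hmax : ∀ b, t l ≤ t b → b = l) : IsNortheast (Function.update t l (r + 1, c)) := by
  intro b b' hbb'
  have hbb'_order := ht hbb'
  rcases eq_or_ne b' l with rfl | hb'
  · have not_ge : ¬ t b' ≤ t b := fun h ↦ hbb'.ne (hmax b h)
    simp only [hl, Prod.le_def, Function.update_self, Function.update_of_ne hbb'.ne]
      at hbb'_order not_ge ⊢
    lia
  · rcases eq_or_ne b l with rfl | hb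
    · simp only [hl, Function.update_self, Function.update_of_ne hb'] at hbb'_order ⊢
      lia
    · simpa only [Function.update_of_ne hb, Function.update_of_ne hb'] using hbb'_order

end Sinks

section DisjointPathSum

variable {ι R : Type*} [Fintype ι] [DecidableEq ι] [CommSemiring R] (x : ℕ → ℕ → R)

/-- The sum of the weights of all families of pairwise vertex-disjoint lattice paths, the `l`-th
one from `(1, s l)` to `t l`. -/
noncomputable def disjointPathSum (s : ι → ℕ) (t : ι → ℕ × ℕ) : R :=
  ∑ p ∈ disjointPathFamilies s t, ∏ l, pathWeight x (p l)

theorem prod_pathWeight_appendAt (l : ι) (v : ℕ × ℕ) (p : ι → List (ℕ × ℕ)) :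
    ∏ b, pathWeight x (appendAt l v p b) = x v.1 v.2 * ∏ b, pathWeight x (p b) := by
  have others_eq : ∏ b ∈ {l}ᶜ, pathWeight x (appendAt l v p b) = ∏ b ∈ {l}ᶜ, pathWeight x (p b) :=
    Finset.prod_congr rfl fun b hb ↦ by rw [appendAt, Function.update_of_ne (by simpa using hb)]
  rw [Fintype.prod_eq_mul_prod_compl l, Fintype.prod_eq_mul_prod_compl l, others_eq, appendAt,
    Function.update_self, pathWeight_append_singleton, mul_assoc]

theorem disjointPathSum_eq_mul_add {s : ι → ℕ} {t : ι → ℕ × ℕ} {l : ι} {r c : ℕ}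
    (hl : t l = (r + 1, c + 1)) (hmax : ∀ b, t l ≤ t b → b = l) :
    disjointPathSum x s t = x (r + 1) (c + 1) *
      (disjointPathSum x s (Function.update t l (r, c + 1)) +
        disjointPathSum x s (Function.update t l (r + 1, c))) := by
  have sinks_ne : Function.update t l (r, c + 1) ≠ Function.update t l (r + 1, c) :=
    (Function.update_injective t l).ne (by simp)
  rw [disjointPathSum, disjointPathFamilies_eq_image_appendAt hl hmax,
    Finset.sum_image (appendAt_injective l _).injOn,
    Finset.sum_union (disjoint_disjointPathFamilies sinks_ne), mul_add]
  simp only [prod_pathWeight_appendAt, disjointPathSum, Finset.mul_sum]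

end DisjointPathSum

section PathMatrix

open Matrix

variable {ι R : Type*} [CommSemiring R] (x : ℕ → ℕ → R)

/-- The matrix of path sums, with rows indexed by the sinks `t` and columns by the sources
`(1, s a)`. -/
def pathMatrix (s : ι → ℕ) (t : ι → ℕ × ℕ) : Matrix ι ι R :=
  of fun b a ↦ pathSum x (s a) (t b).1 (t b).2

theorem pathMatrix_update [DecidableEq ι] (s : ι → ℕ) (t : ι → ℕ × ℕ) (l : ι) (v : ℕ × ℕ) :
    pathMatrix x s (Function.update t l v) =
      (pathMatrix x s t).updateRow l fun a ↦ pathSum x (s a) v.1 v.2 := by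
  ext b a
  rcases eq_or_ne b l with rfl | hb
  · simp [pathMatrix]
  · simp [pathMatrix, hb]

end PathMatrix

section LindstromGesselViennot

open Matrix

variable {ι R : Type*} [Fintype ι] [CommRing R] (x : ℕ → ℕ → R) {s : ι → ℕ} {t : ι → ℕ × ℕ}

section DecidableEq

variable [DecidableEq ι] {l : ι}

theorem det_pathMatrix_eq_mul_add {r c : ℕ} (hl : t l = (r + 1, c + 1)) :
    (pathMatrix x s t).det = x (r + 1) (c + 1) *
      ((pathMatrix x s (Function.update t l (r, c + 1))).det +
        (pathMatrix x s (Function.update t l (r + 1, c))).det) := by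
  have row_recurrence : (fun a ↦ pathSum x (s a) (r + 1) (c + 1)) = x (r + 1) (c + 1) •
      ((fun a ↦ pathSum x (s a) r (c + 1)) + fun a ↦ pathSum x (s a) (r + 1) c) :=
    funext fun a ↦ pathSum_succ_succ x r c
  rw [← Function.update_eq_self l t, hl]
  simp only [Function.update_idem, pathMatrix_update]
  rw [row_recurrence, det_updateRow_smul, det_updateRow_add]

theorem disjointPathSum_eq_det_of_not_injective (hs : s.Injective) (ht : ¬ t.Injective) :
    disjointPathSum x s t = (pathMatrix x s t).det := by
  obtain ⟨l, l', hll', hne⟩ : ∃ l l', t l = t l' ∧ l ≠ l' := by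
    simpa [Function.Injective] using ht
  rw [disjointPathSum, disjointPathFamilies_eq_empty_of_not_injective hs ht, Finset.sum_empty,
    det_zero_of_row_eq hne (by ext a; simp [pathMatrix, hll'])]

theorem disjointPathSum_eq_det_of_gridPaths_eq_empty
    (h : ∀ a, gridPaths (s a) (t l).1 (t l).2 = ∅) :
    disjointPathSum x s t = (pathMatrix x s t).det := by
  rw [disjointPathSum, disjointPathFamilies_eq_empty_of_gridPaths_eq_empty (h l), Finset.sum_empty,
    det_eq_zero_of_row_eq_zero l fun a ↦ by simp [pathMatrix, pathSum, h a]]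

theorem disjointPathSum_zero_row (hs : s.Injective) :
    disjointPathSum x s (fun l ↦ (0, s l)) = (pathMatrix x s fun l ↦ (0, s l)).det := by
  have matrix_eq_one : (pathMatrix x s fun l ↦ (0, s l)) = 1 := by
    ext b a
    simp [pathMatrix, pathSum_zero, one_apply, hs.eq_iff]
  have families_eq : disjointPathFamilies s (fun l ↦ (0, s l)) = {fun _ ↦ []} := by
    ext p
    simp only [mem_disjointPathFamilies, mem_gridPaths_zero, true_and, Finset.mem_singleton,
      ← funext_iff]
    refine ⟨And.left, ?_⟩
    rintro rfl
    simp [Pairwise]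
  rw [disjointPathSum, families_eq, matrix_eq_one]
  simp [pathWeight]

end DecidableEq

variable [LinearOrder ι]

theorem disjointPathSum_eq_det_of_row_eq_zero (hs : StrictMono s) (ht : IsNortheast t)
    (ht_inj : t.Injective) (hrow : ∀ l, (t l).1 = 0) :
    disjointPathSum x s t = (pathMatrix x s t).det := by
  have t_eq (l : ι) : t l = (0, (t l).2) := Prod.ext (hrow l) rfl
  by_cases hcol : ∀ l, ∃ a, s a = (t l).2
  · choose f hf using hcol
    have col_strictMono : StrictMono fun l ↦ (t l).2 := fun l l' hll' ↦
      (ht hll').2.lt_of_ne fun h ↦ hll'.ne (ht_inj (by rw [t_eq l, t_eq l', h]))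
    have col_eq : (fun l ↦ (t l).2) = s := by
      have f_injective : f.Injective := fun l l' h ↦
        col_strictMono.injective (by simp only [← hf, h])
      have range_eq := (Finite.injective_iff_surjective.1 f_injective).range_comp s
      rw [← col_strictMono.range_inj hs, ← range_eq]
      simp only [Function.comp_def, hf]
    obtain rfl : t = fun l ↦ (0, s l) := by simpa only [← col_eq] using funext t_eq
    exact disjointPathSum_zero_row x hs.injective
  · push Not at hcol
    obtain ⟨l, hl⟩ := hcol
    refine disjointPathSum_eq_det_of_gridPaths_eq_empty x (l := l) fun a ↦ ?_
    rw [hrow, gridPaths, if_neg (hl a).symm]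

theorem disjointPathSum_eq_det (hs : StrictMono s) (ht : IsNortheast t) :
    disjointPathSum x s t = (pathMatrix x s t).det := by
  induction t using WellFoundedLT.induction with
  | _ t ih
  by_cases ht_inj : t.Injective
  swap
  · exact disjointPathSum_eq_det_of_not_injective x hs.injective ht_inj
  by_cases hrow : ∀ l, (t l).1 = 0
  · exact disjointPathSum_eq_det_of_row_eq_zero x hs ht ht_inj hrow
  push Not at hrow
  obtain ⟨l, hl_row, hmax⟩ := exists_maximal_sink ht_inj hrow.choose_spec
  obtain ⟨r, hr⟩ := Nat.exists_eq_succ_of_ne_zero hl_row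
  cases hc : (t l).2 with
  | zero =>
    refine disjointPathSum_eq_det_of_gridPaths_eq_empty x (l := l) fun a ↦ ?_
    rw [hr, hc, gridPaths_succ_zero]
  | succ c =>
    have hl : t l = (r + 1, c + 1) := Prod.ext hr hc
    rw [disjointPathSum_eq_mul_add x hl hmax, det_pathMatrix_eq_mul_add x hl,
      ih _ (update_lt_self_iff.2 (by simp [hl])) (ht.update_pred_row hl hmax),
      ih _ (update_lt_self_iff.2 (by simp [hl])) (ht.update_pred_col hl hmax)]

end LindstromGesselViennot

namespace NCTuple

variable {m n k : ℕ} {f g : ℕ → ℕ × ℕ}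

/-- The paths of a tuple as a function on `Fin k`. -/
def family (T : NCTuple m n ((List.range k).map f) ((List.range k).map g)) :
    Fin k → List (ℕ × ℕ) :=
  fun l ↦ T.path.getD l []

theorem length_path (T : NCTuple m n ((List.range k).map f) ((List.range k).map g)) :
    T.path.length = k := by
  simpa using T.hlen

theorem path_eq_ofFn_family (T : NCTuple m n ((List.range k).map f) ((List.range k).map g)) :
    T.path = List.ofFn T.family :=
  List.ext_getElem (by simp [T.length_path]) fun l hl _ ↦ by simp [family, hl]

theorem family_injective : (family (m := m) (n := n) (k := k) (f := f) (g := g)).Injective := by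
  intro T T' h
  have path_eq : T.path = T'.path := by rw [T.path_eq_ofFn_family, T'.path_eq_ofFn_family, h]
  cases T
  cases T'
  simpa using path_eq

theorem isGridPath_family (T : NCTuple m n ((List.range k).map f) ((List.range k).map g))
    (l : Fin k) : IsGridPath m n (f l) (g l) (T.family l) := by
  simpa [family] using T.valid l (by simp [T.length_path])

theorem pairwise_disjoint_family
    (T : NCTuple m n ((List.range k).map f) ((List.range k).map g)) :
    Pairwise fun l l' ↦ (T.family l).Disjoint (T.family l') :=
  fun l l' hll' v ↦ T.disj l l' (by simp [T.length_path]) (by simp [T.length_path])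
    (Fin.val_ne_of_ne hll') v

theorem mem_range_family {p : Fin k → List (ℕ × ℕ)} :
    p ∈ Set.range (family (m := m) (n := n) (f := f) (g := g)) ↔
      (∀ l : Fin k, IsGridPath m n (f l) (g l) (p l)) ∧
        Pairwise fun l l' ↦ (p l).Disjoint (p l') := by
  constructor
  · rintro ⟨T, rfl⟩
    exact ⟨T.isGridPath_family, T.pairwise_disjoint_family⟩
  · rintro ⟨hpath, hdisj⟩
    have getD_ofFn (l : ℕ) (hl : l < k) : (List.ofFn p).getD l [] = p ⟨l, hl⟩ := by simp [hl]
    refine ⟨⟨List.ofFn p, by simp, by simp, fun l hl ↦ ?_, fun l l' hl hl' hll' v ↦ ?_⟩, ?_⟩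
    · rw [List.length_ofFn] at hl
      simpa [getD_ofFn l hl, hl] using hpath ⟨l, hl⟩
    · rw [List.length_ofFn] at hl hl'
      rw [getD_ofFn l hl, getD_ofFn l' hl']
      exact @hdisj ⟨l, hl⟩ ⟨l', hl'⟩ (by simpa using hll') v
    · exact funext fun l ↦ getD_ofFn l l.2

end NCTuple

section TuplePathSum

variable {R : Type*}

/-- `ȳ_{i,j,k}` with entries in an arbitrary commutative semiring; over `ℝ` it unfolds to the same
sum as `ybar`. -/
noncomputable def tuplePathSum [CommSemiring R] (m n : ℕ) (x : ℕ → ℕ → R) (i j k : ℕ) : R :=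
  ∑ᶠ T : NCTuple m n ((List.range k).map fun l => (1, l + 1))
      ((List.range k).map fun l => (i, j - k + (l + 1))),
    (T.path.map fun p => (p.map fun v => x v.1 v.2).prod).prod

variable {m n i j k s : ℕ}

theorem coe_disjointPathFamilies_eq_range_family (hi : 1 ≤ i) (him : i ≤ m) (hjn : j ≤ n)
    (hkj : k ≤ j) :
    (disjointPathFamilies (fun l : Fin k ↦ l + 1) fun l ↦ (i, j - k + (l + 1)) : Set _) =
      Set.range (NCTuple.family (m := m) (n := n) (k := k) (f := fun l ↦ (1, l + 1))
        (g := fun l ↦ (i, j - k + (l + 1)))) := by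
  ext p
  rw [NCTuple.mem_range_family, Finset.mem_coe, mem_disjointPathFamilies]
  refine and_congr_left fun _ ↦ forall_congr' fun l ↦ ?_
  rw [isGridPath_iff_mem_gridPaths hi him (by lia)]

theorem tuplePathSum_eq_disjointPathSum [CommSemiring R] (x : ℕ → ℕ → R) (hi : 1 ≤ i)
    (him : i ≤ m) (hjn : j ≤ n) (hkj : k ≤ j) :
    tuplePathSum m n x i j k =
      disjointPathSum x (fun l : Fin k ↦ l + 1) fun l ↦ (i, j - k + (l + 1)) := by
  rw [disjointPathSum, ← finsum_mem_coe_finset,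
    coe_disjointPathFamilies_eq_range_family hi him hjn hkj,
    finsum_mem_range NCTuple.family_injective, tuplePathSum]
  refine finsum_congr fun T ↦ ?_
  rw [T.path_eq_ofFn_family, List.map_ofFn, List.prod_ofFn]
  rfl

theorem tuplePathSum_eq_det [CommRing R] (x : ℕ → ℕ → R) (hi : 1 ≤ i) (him : i ≤ m)
    (hjn : j ≤ n) (hs : 1 ≤ s) (hj : j + 1 = s + k) :
    tuplePathSum m n x i j k = (consecutiveBlock (fun c a ↦ pathSum x (a + 1) i c) s k).det := by
  have sink_eq (l : Fin k) : j - k + (l + 1) = s + l := by lia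
  have sources_strictMono : StrictMono fun l : Fin k ↦ (l : ℕ) + 1 := fun l l' h ↦ by simpa using h
  have sinks_isNortheast : IsNortheast fun l : Fin k ↦ (i, s + (l : ℕ)) :=
    fun l l' h ↦ ⟨le_rfl, by simpa using h.le⟩
  rw [tuplePathSum_eq_disjointPathSum x hi him hjn (by lia)]
  simp only [sink_eq]
  exact disjointPathSum_eq_det x sources_strictMono sinks_isNortheast

end TuplePathSum

theorem stmt_8_general {R : Type*} [CommRing R] {m n i j k : ℕ} (x : ℕ → ℕ → R) (hi : 2 ≤ i)
    (him : i ≤ m) (hjn : j ≤ n) (hk : 1 ≤ k) (hkj : k < j) :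
    tuplePathSum m n x i j k * tuplePathSum m n x (i - 1) (j - 1) (k - 1) =
      x i j * (tuplePathSum m n x (i - 1) j k * tuplePathSum m n x i (j - 1) (k - 1) +
        tuplePathSum m n x (i - 1) j (k - 1) * tuplePathSum m n x i (j - 1) k) := by
  obtain ⟨r, rfl⟩ := Nat.exists_eq_add_of_le' (one_le_two.trans hi)
  obtain ⟨k, rfl⟩ := Nat.exists_eq_add_of_le' hk
  obtain ⟨s, rfl⟩ := Nat.exists_eq_add_of_le' hkj.le
  have hs : 1 ≤ s := by lia
  have hr : 1 ≤ r := by lia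
  simp only [Nat.add_sub_cancel, ← add_assoc] at hjn ⊢
  rw [tuplePathSum_eq_det (s := s + 1) x (by lia) him hjn (by lia) (by lia),
    tuplePathSum_eq_det (s := s + 1) x hr (by lia) (by lia) (by lia) (by lia),
    tuplePathSum_eq_det (s := s + 1) x hr (by lia) hjn (by lia) (by lia),
    tuplePathSum_eq_det (s := s + 1) x (by lia) him (by lia) (by lia) (by lia),
    tuplePathSum_eq_det (s := s + 2) x hr (by lia) hjn (by lia) (by lia),
    tuplePathSum_eq_det (s := s) x (by lia) him (by lia) hs (by lia)]
  exact det_consecutiveBlock_mul_det_consecutiveBlock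
    (fun c ↦ funext fun a ↦ pathSum_succ_succ x r c) s k

/-- `ȳ_{i,j,k} ȳ_{i-1,j-1,k-1} = x_{ij}(ȳ_{i-1,j,k} ȳ_{i,j-1,k-1} + ȳ_{i-1,j,k-1} ȳ_{i,j-1,k})`. -/
theorem stmt_8 (m n : ℕ) (x : ℕ → ℕ → ℝ) (hx : ∀ i j, 0 < x i j)
    (i j k : ℕ) (hi : 2 ≤ i) (him : i ≤ m) (hj : 2 ≤ j) (hjn : j ≤ n)
    (hk : 1 ≤ k) (hk' : k ≤ min i j - 1) :
    ybar m n x i j k * ybar m n x (i - 1) (j - 1) (k - 1) =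
      x i j * (ybar m n x (i - 1) j k * ybar m n x i (j - 1) (k - 1) +
        ybar m n x (i - 1) j (k - 1) * ybar m n x i (j - 1) k) := by
  exact stmt_8_general x hi him hjn hk (by lia)
end

section
/- Let λ = (λ_1 ≥ … ≥ λ_k ≥ 0) be a partition, let 1 ≤ a ≤ b be integers and c ∈ ℤ. Then the sum, over all k-tuples (π_1,…,π_k) of pairwise vertex-disjoint directed paths in ℤ² with π_l going from (λ_{k+1−l}+l+c, b) to (l+c, a), of the product of the edge weights of all the paths, equals the Schur polynomial s^{[a,b]}_λ (as polynomials in x_a,…,x_b). -/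
/-- A semistandard Young tableau of shape `(lam 0, lam 1, …, lam (k-1))` (so `lam i` is the
length of the `(i+1)`-st row), with entries in `{a, a+1, …, b}`: rows weakly increase,
columns strictly increase.  Entries outside the shape are `0`. -/
structure SSYT (k : ℕ) (lam : ℕ → ℤ) (a b : ℕ) where
  entry : ℕ → ℕ → ℕ
  zero_outside : ∀ i j : ℕ, ¬(i < k ∧ (j : ℤ) < lam i) → entry i j = 0
  lower : ∀ i j : ℕ, i < k → (j : ℤ) < lam i → a ≤ entry i j
  upper : ∀ i j : ℕ, i < k → (j : ℤ) < lam i → entry i j ≤ b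
  row_weak : ∀ i j₁ j₂ : ℕ, i < k → j₁ ≤ j₂ → (j₂ : ℤ) < lam i → entry i j₁ ≤ entry i j₂
  col_strict : ∀ i₁ i₂ j : ℕ, i₁ < i₂ → i₂ < k → (j : ℤ) < lam i₂ → entry i₁ j < entry i₂ j

/-- The monomial `Π_i x_i^{m(i,T)}` of a tableau: the product of `x_{T(c)}` over the
cells `c` of the shape. -/
noncomputable def SSYT.weight {k : ℕ} {lam : ℕ → ℤ} {a b : ℕ} (T : SSYT k lam a b) :
    MvPolynomial ℕ ℤ :=
  ∏ i ∈ Finset.range k, ∏ j ∈ Finset.range (lam i).toNat, MvPolynomial.X (T.entry i j)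

/-- `(lam 0, …, lam (k-1))` is a partition: weakly decreasing with nonnegative entries. -/
def IsPartitionSeq (k : ℕ) (lam : ℕ → ℤ) : Prop :=
  (∀ i, i + 1 < k → lam (i + 1) ≤ lam i) ∧ (∀ i, i < k → 0 ≤ lam i)

/-- The Schur polynomial `s^{[a,b]}_lam = Σ_T Π_i x_i^{m(i,T)}`, the sum running over all
semistandard Young tableaux of shape `lam` with entries in `{a,…,b}`; by convention it is
`0` if `lam` is not a partition. -/
noncomputable def schur (k : ℕ) (lam : ℕ → ℤ) (a b : ℕ) : MvPolynomial ℕ ℤ :=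
  letI := Classical.dec (IsPartitionSeq k lam)
  if IsPartitionSeq k lam then ∑ᶠ T : SSYT k lam a b, T.weight else 0

/-- One step of a directed path in `ℤ²`: from `(i,j)` to `(i-1,j)` or `(i,j-1)`. -/
def ZStep (u v : ℤ × ℤ) : Prop := v = (u.1 - 1, u.2) ∨ v = (u.1, u.2 - 1)

/-- `p` is a directed path in `ℤ²` from `src` to `tgt`. -/
def IsZPath (src tgt : ℤ × ℤ) (p : List (ℤ × ℤ)) : Prop :=
  p.head? = some src ∧ p.getLast? = some tgt ∧ List.Chain' ZStep p

/-- A tuple of pairwise vertex-disjoint directed paths in `ℤ²`, the `l`-th one going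
from the `l`-th entry of `src` to the `l`-th entry of `tgt`. -/
structure ZNCTuple (src tgt : List (ℤ × ℤ)) where
  path : List (List (ℤ × ℤ))
  hlen : path.length = src.length
  hlen' : path.length = tgt.length
  valid : ∀ l, l < path.length →
    IsZPath (src.getD l (0, 0)) (tgt.getD l (0, 0)) (path.getD l [])
  disj : ∀ l l', l < path.length → l' < path.length → l ≠ l' →
    ∀ v ∈ path.getD l [], v ∉ path.getD l' []

/-- The weight of a path in `ℤ²`: horizontal edges `(i,j) → (i-1,j)` have weight `x_j`,
vertical edges have weight `1`. -/
noncomputable def zPathWeight (p : List (ℤ × ℤ)) : MvPolynomial ℕ ℤ :=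
  ((p.zip p.tail).map fun e =>
    if e.2.1 = e.1.1 - 1 then MvPolynomial.X e.1.2.toNat else 1).prod

/-!
Read a path from `(d + n, y)` to `(d, a)` through the heights `h 0 ≤ h 1 ≤ … ≤ h (n - 1)` of its
horizontal edges, listed from the target. They determine the path, they can be any weakly
increasing sequence in `[a, y]`, and the weight of the path is `∏ x_{h j}`; so the path plays the
role of a tableau row. For two paths with a common starting height and a common final height, the
targets being horizontal neighbours, being disjoint amounts to `h₁ j < h₂ j` for all `j`, where `h₁`
belongs to the right-hand path: the columns of the tableau strictly increase. Hence tuples of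
disjoint paths and tableaux are in weight-preserving bijection, with the rightmost path giving the
first row.
-/

attribute [ext] SSYT ZNCTuple

open MvPolynomial (X)

/-! ### Paths and tuples of paths -/

theorem isZPath_iff {s t : ℤ × ℤ} {p : List (ℤ × ℤ)} :
    IsZPath s t p ↔ p.head? = some s ∧ p.getLast? = some t ∧ p.IsChain ZStep :=
  Iff.rfl

theorem isZPath_singleton {s t u : ℤ × ℤ} : IsZPath s t [u] ↔ u = s ∧ u = t := by
  simp [isZPath_iff]

theorem isZPath_cons_cons {s t u v : ℤ × ℤ} {p : List (ℤ × ℤ)} :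
    IsZPath s t (u :: v :: p) ↔ u = s ∧ ZStep u v ∧ IsZPath v t (v :: p) := by
  simp only [isZPath_iff, List.head?_cons, Option.some.injEq, List.getLast?_cons_cons,
    List.isChain_cons_cons, true_and]
  tauto

theorem IsZPath.tgt_le_src {s t : ℤ × ℤ} {p : List (ℤ × ℤ)} (H : IsZPath s t p) : t ≤ s := by
  induction p generalizing s with
  | nil => simp [isZPath_iff] at H
  | cons u p ih =>
    cases p with
    | nil =>
      obtain ⟨rfl, rfl⟩ := isZPath_singleton.mp H
      exact le_rfl
    | cons v p =>
      obtain ⟨rfl, hstep, hp⟩ := isZPath_cons_cons.mp H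
      refine (ih hp).trans ?_
      rcases hstep with rfl | rfl <;> simp [Prod.le_def]

theorem zPathWeight_cons_cons (u v : ℤ × ℤ) (p : List (ℤ × ℤ)) :
    zPathWeight (u :: v :: p) =
      (if v.1 = u.1 - 1 then X u.2.toNat else 1) * zPathWeight (v :: p) := by
  simp [zPathWeight]

theorem getD_map_range {α : Type*} {k l : ℕ} (f : ℕ → α) (x : α) (hl : l < k) :
    ((List.range k).map f).getD l x = f l := by
  simp [hl]

namespace ZNCTuple

variable {k : ℕ} {s t : ℕ → ℤ × ℤ}

theorem length_path (T : ZNCTuple ((List.range k).map s) ((List.range k).map t)) :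
    T.path.length = k := by
  simpa using T.hlen

theorem isZPath (T : ZNCTuple ((List.range k).map s) ((List.range k).map t)) {l : ℕ}
    (hl : l < k) : IsZPath (s l) (t l) (T.path.getD l []) := by
  simpa only [getD_map_range _ _ hl] using T.valid l (T.length_path.symm ▸ hl)

theorem path_eq_map_range (T : ZNCTuple ((List.range k).map s) ((List.range k).map t)) :
    T.path = (List.range k).map fun l => T.path.getD l [] := by
  refine List.ext_getElem (by simp [T.length_path]) fun l hl _ => ?_
  simp [hl]

theorem prod_map_path {M : Type*} [CommMonoid M] (w : List (ℤ × ℤ) → M)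
    (T : ZNCTuple ((List.range k).map s) ((List.range k).map t)) :
    (T.path.map w).prod = ∏ l ∈ Finset.range k, w (T.path.getD l []) := by
  conv_lhs => rw [T.path_eq_map_range, List.map_map]
  rfl

/-- The tuple of the paths `p 0, …, p (k - 1)`; disjointness is only asked for `l' < l`. -/
def ofPaths (p : ℕ → List (ℤ × ℤ)) (hp : ∀ l < k, IsZPath (s l) (t l) (p l))
    (hdisj : ∀ l < k, ∀ l' < l, (p l).Disjoint (p l')) :
    ZNCTuple ((List.range k).map s) ((List.range k).map t) where
  path := (List.range k).map p
  hlen := by simp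
  hlen' := by simp
  valid l hl := by
    have hlk : l < k := by simpa using hl
    simpa only [getD_map_range _ _ hlk] using hp l hlk
  disj l l' hl hl' hne v hv hv' := by
    have hlk : l < k := by simpa using hl
    have hlk' : l' < k := by simpa using hl'
    rw [getD_map_range _ _ hlk] at hv
    rw [getD_map_range _ _ hlk'] at hv'
    rcases hne.lt_or_gt with hlt | hlt
    · exact hdisj l' hlk' l hlt hv' hv
    · exact hdisj l hlk l' hlt hv hv'

end ZNCTuple

/-! ### Paths and the heights of their horizontal edges -/

/-- The sequence `a, h 0, …, h (n - 1), y, y, …`. For a path from `(d + n, y)` to `(d, a)` whose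
horizontal edges have heights `h`, the values at `j` and `j + 1` are the lowest and the highest
height the path visits in the column `d + j`. -/
def heightProfile (a : ℕ) (h : ℕ → ℕ) (n y : ℕ) : ℕ → ℕ
  | 0 => a
  | j + 1 => if j < n then h j else y

section heightProfile

variable {a n y : ℕ} {h : ℕ → ℕ}

theorem heightProfile_succ_of_lt {j : ℕ} (hj : j < n) : heightProfile a h n y (j + 1) = h j :=
  if_pos hj

theorem heightProfile_succ_of_le {j : ℕ} (hj : n ≤ j) : heightProfile a h n y (j + 1) = y :=
  if_neg hj.not_gt

theorem heightProfile_congr_of_le {y' j : ℕ} (hj : j ≤ n) :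
    heightProfile a h n y j = heightProfile a h n y' j := by
  cases j with
  | zero => rfl
  | succ j => rw [heightProfile_succ_of_lt hj, heightProfile_succ_of_lt hj]

theorem heightProfile_succ_length (hy : h n = y) :
    heightProfile a h (n + 1) y = heightProfile a h n y := by
  funext j
  cases j with
  | zero => rfl
  | succ j => grind [heightProfile]

theorem monotone_heightProfile_iff : Monotone (heightProfile a h n y) ↔
    a ≤ y ∧ (∀ j < n, a ≤ h j ∧ h j ≤ y) ∧ ∀ j₁ j₂, j₁ ≤ j₂ → j₂ < n → h j₁ ≤ h j₂ := by
  constructor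
  · intro hg
    refine ⟨?_, fun j hj => ⟨?_, ?_⟩, fun j₁ j₂ hle hj₂ => ?_⟩
    · simpa [heightProfile] using hg (Nat.zero_le (n + 1))
    · simpa [heightProfile, hj] using hg (Nat.zero_le (j + 1))
    · simpa [heightProfile, hj] using hg (Nat.succ_le_succ hj.le)
    · simpa [heightProfile, hj₂, hle.trans_lt hj₂] using hg (Nat.succ_le_succ hle)
  · rintro ⟨hay, hbounds, hmono⟩
    refine monotone_nat_of_le_succ fun j => ?_
    cases j with
    | zero =>
      have := hbounds 0
      simp only [heightProfile]
      split_ifs <;> lia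
    | succ j =>
      have := hbounds j
      have := hmono j (j + 1) j.le_succ
      simp only [heightProfile]
      split_ifs <;> lia

end heightProfile

/-- `HasHeights d a h n y p`: the list `p` is the directed path from `(d + n, y)` to `(d, a)` whose
horizontal edge from column `d + j + 1` to column `d + j` is at height `h j`, for `j < n`. -/
inductive HasHeights (d : ℤ) (a : ℕ) (h : ℕ → ℕ) : ℕ → ℕ → List (ℤ × ℤ) → Prop
  | nil : HasHeights d a h 0 a [(d, (a : ℤ))]
  | down {n y : ℕ} {p : List (ℤ × ℤ)} (hp : HasHeights d a h n y p) :
      HasHeights d a h n (y + 1) ((d + n, (y : ℤ) + 1) :: p)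
  | left {n y : ℕ} {p : List (ℤ × ℤ)} (hy : h n = y) (hp : HasHeights d a h n y p) :
      HasHeights d a h (n + 1) y ((d + n + 1, (y : ℤ)) :: p)

namespace HasHeights

variable {d : ℤ} {a n y : ℕ} {h h' : ℕ → ℕ} {p p' : List (ℤ × ℤ)}

theorem exists_eq_cons (H : HasHeights d a h n y p) : ∃ q, p = (d + n, (y : ℤ)) :: q := by
  cases H with
  | nil => exact ⟨[], by simp⟩
  | down hp => exact ⟨_, by push_cast; rfl⟩
  | left hy hp => exact ⟨_, by push_cast; rw [add_assoc]⟩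

theorem isZPath (H : HasHeights d a h n y p) : IsZPath (d + n, (y : ℤ)) (d, (a : ℤ)) p := by
  induction H with
  | nil => simp [isZPath_singleton]
  | down hp ih =>
    obtain ⟨q, rfl⟩ := hp.exists_eq_cons
    exact isZPath_cons_cons.mpr ⟨by simp, .inr (by simp), ih⟩
  | left _ hp ih =>
    obtain ⟨q, rfl⟩ := hp.exists_eq_cons
    exact isZPath_cons_cons.mpr ⟨by simp [add_assoc], .inl (by simp), ih⟩

theorem zPathWeight_eq (H : HasHeights d a h n y p) :
    zPathWeight p = ∏ j ∈ Finset.range n, X (h j) := by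
  induction H with
  | nil => simp [zPathWeight]
  | down hp ih =>
    obtain ⟨q, rfl⟩ := hp.exists_eq_cons
    rw [zPathWeight_cons_cons, ih, if_neg (sub_one_lt _).ne', one_mul]
  | left hy hp ih =>
    obtain ⟨q, rfl⟩ := hp.exists_eq_cons
    rw [zPathWeight_cons_cons, ih, if_pos (by simp), Finset.prod_range_succ, mul_comm, hy]
    simp

theorem congr (H : HasHeights d a h n y p) (hh : ∀ j < n, h j = h' j) :
    HasHeights d a h' n y p := by
  induction H with
  | nil => exact .nil
  | down _ ih => exact .down (ih hh)
  | @left n y p hy _ ih =>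
    exact .left (hh n n.lt_succ_self ▸ hy) (ih fun j hj => hh j (Nat.lt_succ_of_lt hj))

theorem monotone_heightProfile (H : HasHeights d a h n y p) :
    Monotone (heightProfile a h n y) := by
  induction H with
  | nil => exact monotone_heightProfile_iff.mpr ⟨le_rfl, by simp, by simp⟩
  | down _ ih => grind [monotone_heightProfile_iff]
  | left hy _ ih => rwa [heightProfile_succ_length hy]

theorem height_le (H : HasHeights d a h n y p) {j : ℕ} (hj : j < n) : h j ≤ y :=
  ((monotone_heightProfile_iff.mp H.monotone_heightProfile).2.1 j hj).2

theorem exists_of_le (H : HasHeights d a h n y p) {y' : ℕ} (hy : y ≤ y') :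
    ∃ p', HasHeights d a h n y' p' := by
  induction y', hy using Nat.le_induction with
  | base => exact ⟨p, H⟩
  | succ y' _ ih =>
    obtain ⟨p', hp'⟩ := ih
    exact ⟨_, hp'.down⟩

theorem exists_path (d : ℤ) (hg : Monotone (heightProfile a h n y)) :
    ∃ p, HasHeights d a h n y p := by
  induction n generalizing y with
  | zero => exact nil.exists_of_le (monotone_heightProfile_iff.mp hg).1
  | succ n ih =>
    obtain ⟨-, hbounds, hmono⟩ := monotone_heightProfile_iff.mp hg
    obtain ⟨han, hny⟩ := hbounds n n.lt_succ_self
    obtain ⟨p, hp⟩ := ih (y := h n) (monotone_heightProfile_iff.mpr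
      ⟨han, fun j hj => ⟨(hbounds j (by lia)).1, hmono j n hj.le n.lt_succ_self⟩,
        fun j₁ j₂ hle hj₂ => hmono j₁ j₂ hle (by lia)⟩)
    exact (left rfl hp).exists_of_le hny

theorem path_unique (H : HasHeights d a h n y p) (H' : HasHeights d a h n y p') : p = p' := by
  induction H generalizing p' with
  | nil =>
    cases H' with
    | nil => rfl
    | down hp' => exact absurd (monotone_heightProfile_iff.mp hp'.monotone_heightProfile).1 (by lia)
  | @down n y p hp ih =>
    cases H' with
    | nil => exact absurd (monotone_heightProfile_iff.mp hp.monotone_heightProfile).1 (by lia)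
    | down hp' => rw [ih hp']
    | left hy' hp' => exact absurd (hp.height_le (Nat.lt_succ_self _)) (by lia)
  | @left n y p hy hp ih =>
    cases H' with
    | down hp' => exact absurd (hp'.height_le (Nat.lt_succ_self _)) (by lia)
    | left hy' hp' => rw [ih hp']

theorem exists_heights (H : IsZPath (d + n, (y : ℤ)) (d, (a : ℤ)) p) :
    ∃ h, HasHeights d a h n y p := by
  induction p generalizing n y with
  | nil => simp [isZPath_iff] at H
  | cons u p ih =>
    cases p with
    | nil =>
      obtain ⟨rfl, htgt⟩ := isZPath_singleton.mp H
      obtain ⟨rfl, rfl⟩ : n = 0 ∧ y = a := by simpa using htgt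
      exact ⟨0, by simpa using nil⟩
    | cons v p =>
      obtain ⟨rfl, hstep, hp⟩ := isZPath_cons_cons.mp H
      have hle := hp.tgt_le_src
      rcases hstep with rfl | rfl
      · obtain ⟨m, rfl⟩ : ∃ m, n = m + 1 :=
          Nat.exists_eq_succ_of_ne_zero (by rintro rfl; simp [Prod.le_def] at hle)
        have hcol : d + ((m + 1 : ℕ) : ℤ) = d + m + 1 := by push_cast; ring
        simp only [hcol, add_sub_cancel_right] at hp ih ⊢
        obtain ⟨h, hh⟩ := ih hp
        exact ⟨Function.update h m y, .left (by simp)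
          (hh.congr fun j hj => (Function.update_of_ne hj.ne _ _).symm)⟩
      · obtain ⟨m, rfl⟩ : ∃ m, y = m + 1 :=
          Nat.exists_eq_succ_of_ne_zero (by rintro rfl; simp [Prod.le_def] at hle; lia)
        simp only [Nat.cast_succ, add_sub_cancel_right] at hp ih ⊢
        obtain ⟨h, hh⟩ := ih hp
        exact ⟨h, .down hh⟩

theorem mem_iff (H : HasHeights d a h n y p) (v : ℤ × ℤ) : v ∈ p ↔ ∃ j ≤ n, v.1 = d + j ∧
    (heightProfile a h n y j : ℤ) ≤ v.2 ∧ v.2 ≤ heightProfile a h n y (j + 1) := by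
  induction H with
  | nil =>
    simp only [List.mem_singleton, Prod.ext_iff, Nat.le_zero, exists_eq_left, heightProfile]
    lia
  | @down n y p hp ih =>
    have hlow : heightProfile a h n y n ≤ y :=
      (hp.monotone_heightProfile n.le_succ).trans_eq (heightProfile_succ_of_le le_rfl)
    have hcolumns : (∃ j < n, v.1 = d + j ∧ (heightProfile a h n (y + 1) j : ℤ) ≤ v.2 ∧
        v.2 ≤ heightProfile a h n (y + 1) (j + 1)) ↔
        ∃ j < n, v.1 = d + j ∧ (heightProfile a h n y j : ℤ) ≤ v.2 ∧
          v.2 ≤ heightProfile a h n y (j + 1) :=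
      exists_congr fun j => and_congr_right fun hj => by
        rw [heightProfile_congr_of_le hj.le, heightProfile_congr_of_le (Nat.succ_le_of_lt hj)]
    simp only [List.mem_cons, ih, Nat.le_iff_lt_or_eq (m := n), or_and_right, exists_or,
      exists_eq_left, hcolumns, heightProfile_succ_of_le le_rfl,
      heightProfile_congr_of_le (y := y + 1) (y' := y) le_rfl, Prod.ext_iff]
    rw [or_left_comm]
    refine or_congr_right ?_
    lia
  | @left n y p hy _ ih =>
    have hcorner : v = (d + n + 1, (y : ℤ)) ↔ v.1 = d + (n + 1 : ℕ) ∧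
        (heightProfile a h n y (n + 1) : ℤ) ≤ v.2 ∧ v.2 ≤ heightProfile a h n y (n + 2) := by
      rw [heightProfile_succ_of_le le_rfl, heightProfile_succ_of_le n.le_succ, Prod.ext_iff]
      lia
    simp only [heightProfile_succ_length hy, List.mem_cons, ih, hcorner, Nat.le_add_one_iff,
      or_and_right, exists_or, exists_eq_left]
    exact or_comm

theorem mem_corner (H : HasHeights d a h n y p) {j : ℕ} (hj : j < n) :
    (d + (j + 1 : ℕ), (h j : ℤ)) ∈ p := by
  refine (H.mem_iff _).mpr ⟨j + 1, hj, rfl, ?_, ?_⟩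
  · rw [heightProfile_succ_of_lt hj]
  · rw [← heightProfile_succ_of_lt (a := a) (h := h) (y := y) hj]
    exact Int.ofNat_le.mpr (H.monotone_heightProfile (j + 1).le_succ)

theorem height_le_of_mem (H : HasHeights d a h n y p) {j : ℕ} (hj : j < n) {x : ℤ}
    (hx : (d + (j + 1 : ℕ), x) ∈ p) : (h j : ℤ) ≤ x := by
  obtain ⟨i, -, hcol, hlow, -⟩ := (H.mem_iff _).mp hx
  obtain rfl : j + 1 = i := by exact_mod_cast add_left_cancel hcol
  rwa [heightProfile_succ_of_lt hj] at hlow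

theorem height_unique (H : HasHeights d a h n y p) (H' : HasHeights d a h' n y p) {j : ℕ}
    (hj : j < n) : h j = h' j :=
  le_antisymm (by exact_mod_cast H.height_le_of_mem hj (H'.mem_corner hj))
    (by exact_mod_cast H'.height_le_of_mem hj (H.mem_corner hj))

end HasHeights

/-! ### Disjoint paths and strictly increasing columns -/

section Disjoint

variable {d d₁ d₂ : ℤ} {a b n₁ n₂ : ℕ} {h₁ h₂ : ℕ → ℕ} {p₁ p₂ : List (ℤ × ℤ)}

theorem HasHeights.disjoint (H₁ : HasHeights d₁ a h₁ n₁ b p₁) (H₂ : HasHeights d₂ a h₂ n₂ b p₂)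
    (hd : d₂ < d₁) (hn : n₂ ≤ n₁) (hlt : ∀ j < n₂, h₁ j < h₂ j) : p₁.Disjoint p₂ := by
  intro v hv₁ hv₂
  obtain ⟨j₁, -, hcol₁, -, hup₁⟩ := (H₁.mem_iff v).mp hv₁
  obtain ⟨j₂, hj₂, hcol₂, hlow₂, -⟩ := (H₂.mem_iff v).mp hv₂
  have hj : j₁ < j₂ := by lia
  have hj₁ : j₁ < n₂ := hj.trans_le hj₂
  refine lt_irrefl v.2 ?_
  calc v.2 ≤ heightProfile a h₁ n₁ b (j₁ + 1) := hup₁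
    _ = h₁ j₁ := by rw [heightProfile_succ_of_lt (hj₁.trans_le hn)]
    _ < h₂ j₁ := by exact_mod_cast hlt j₁ hj₁
    _ = heightProfile a h₂ n₂ b (j₁ + 1) := by rw [heightProfile_succ_of_lt hj₁]
    _ ≤ heightProfile a h₂ n₂ b j₂ := by exact_mod_cast H₂.monotone_heightProfile hj
    _ ≤ v.2 := hlow₂

theorem HasHeights.lt_of_disjoint (H₁ : HasHeights (d + 1) a h₁ n₁ b p₁)
    (H₂ : HasHeights d a h₂ n₂ b p₂) (hn : n₂ ≤ n₁) (hdisj : p₁.Disjoint p₂) {j : ℕ}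
    (hj : j < n₂) : h₁ j < h₂ j := by
  -- Otherwise the right path passes through the corner of the left one in column `d + j + 1`.
  have hstep (j : ℕ) (hj : j < n₂)
      (hlow : heightProfile a h₁ n₁ b j ≤ heightProfile a h₂ n₂ b j) : h₁ j < h₂ j := by
    by_contra! hge
    refine hdisj ((H₁.mem_iff _).mpr ⟨j, by lia, by push_cast; ring, ?_, ?_⟩) (H₂.mem_corner hj)
    · rw [← heightProfile_succ_of_lt (a := a) (h := h₂) (y := b) hj]
      exact Int.ofNat_le.mpr (hlow.trans (H₂.monotone_heightProfile j.le_succ))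
    · rw [heightProfile_succ_of_lt (hj.trans_le hn)]
      exact Int.ofNat_le.mpr hge
  induction j with
  | zero => exact hstep 0 hj le_rfl
  | succ j ih =>
    have hj' : j < n₂ := Nat.lt_of_succ_lt hj
    refine hstep (j + 1) hj ?_
    rw [heightProfile_succ_of_lt hj', heightProfile_succ_of_lt (hj'.trans_le hn)]
    exact (ih hj').le

end Disjoint

/-! ### Tableaux and tuples of disjoint paths -/

section Tableaux

variable {k : ℕ} {lam : ℕ → ℤ} {a b : ℕ} {c : ℤ}

theorem SSYT.monotone_heightProfile (hab : a ≤ b) (S : SSYT k lam a b) {i : ℕ} (hi : i < k) :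
    Monotone (heightProfile a (S.entry i) (lam i).toNat b) :=
  monotone_heightProfile_iff.mpr ⟨hab,
    fun j hj => ⟨S.lower i j hi (by lia), S.upper i j hi (by lia)⟩,
    fun j₁ j₂ hle hj₂ => S.row_weak i j₁ j₂ hi hle (by lia)⟩

theorem lt_of_adjacent_rows_lt (hlam : AntitoneOn lam (Set.Iio k)) {h : ℕ → ℕ → ℕ}
    (hcol : ∀ i j : ℕ, i + 1 < k → (j : ℤ) < lam (i + 1) → h i j < h (i + 1) j)
    {i₁ i₂ j : ℕ} (hi : i₁ < i₂) (hi₂ : i₂ < k) (hj : (j : ℤ) < lam i₂) : h i₁ j < h i₂ j := by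
  induction i₂, hi using Nat.le_induction with
  | base => exact hcol i₁ j hi₂ hj
  | succ i _ ih =>
    have hik : i < k := Nat.lt_of_succ_lt hi₂
    exact (ih hik (hj.trans_le (hlam hik hi₂ i.le_succ))).trans (hcol i j hi₂ hj)

theorem exists_ssyt_of_rows (hlam : AntitoneOn lam (Set.Iio k)) {h : ℕ → ℕ → ℕ}
    (hrow : ∀ i < k, Monotone (heightProfile a (h i) (lam i).toNat b))
    (hcol : ∀ i j : ℕ, i + 1 < k → (j : ℤ) < lam (i + 1) → h i j < h (i + 1) j) :
    ∃ S : SSYT k lam a b, ∀ i j : ℕ, i < k → (j : ℤ) < lam i → S.entry i j = h i j := by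
  have hbounds := fun i hi => (monotone_heightProfile_iff.mp (hrow i hi)).2.1
  have hmono := fun i hi => (monotone_heightProfile_iff.mp (hrow i hi)).2.2
  refine ⟨{
    entry := fun i j => if i < k ∧ (j : ℤ) < lam i then h i j else 0
    zero_outside := fun i j hij => if_neg hij
    lower := fun i j hi hj => ?_
    upper := fun i j hi hj => ?_
    row_weak := fun i j₁ j₂ hi hle hj₂ => ?_
    col_strict := fun i₁ i₂ j hlt hi₂ hj => ?_ }, fun i j hi hj => if_pos ⟨hi, hj⟩⟩
  · rw [if_pos ⟨hi, hj⟩]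
    exact (hbounds i hi j (by lia)).1
  · rw [if_pos ⟨hi, hj⟩]
    exact (hbounds i hi j (by lia)).2
  · rw [if_pos ⟨hi, by lia⟩, if_pos ⟨hi, hj₂⟩]
    exact hmono i hi j₁ j₂ hle (by lia)
  · have hi₁ : i₁ < k := hlt.trans hi₂
    rw [if_pos ⟨hi₁, hj.trans_le (hlam hi₁ hi₂ hlt.le)⟩, if_pos ⟨hi₂, hj⟩]
    exact lt_of_adjacent_rows_lt hlam hcol hlt hi₂ hj

/-- The starting points of the paths: the `l`-th one, counted from `0`, belongs to the row
`k - 1 - l` of the tableau. -/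
abbrev pathSources (k : ℕ) (lam : ℕ → ℤ) (b : ℕ) (c : ℤ) : List (ℤ × ℤ) :=
  (List.range k).map fun l : ℕ => (lam (k - 1 - l) + (l : ℤ) + 1 + c, (b : ℤ))

/-- The end points of the paths, counted from `0`. -/
abbrev pathTargets (k a : ℕ) (c : ℤ) : List (ℤ × ℤ) :=
  (List.range k).map fun l : ℕ => ((l : ℤ) + 1 + c, (a : ℤ))

/-- The tuple of paths `T` and the tableau `S` correspond to each other: the heights of the
horizontal edges of the `l`-th path form the row `k - 1 - l` of `S`. -/
def RowsAreHeights (T : ZNCTuple (pathSources k lam b c) (pathTargets k a c))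
    (S : SSYT k lam a b) : Prop :=
  ∀ l < k, HasHeights ((l : ℤ) + 1 + c) a (S.entry (k - 1 - l)) (lam (k - 1 - l)).toNat b
    (T.path.getD l [])

theorem reverse_reverse_index {i : ℕ} (hi : i < k) : k - 1 - (k - 1 - i) = i :=
  Nat.sub_sub_self (Nat.le_sub_one_of_lt hi)

theorem pathSource_eq (hpos : ∀ i < k, 0 ≤ lam i) {l : ℕ} (hl : l < k) :
    (lam (k - 1 - l) + (l : ℤ) + 1 + c, (b : ℤ)) =
      ((l : ℤ) + 1 + c + ((lam (k - 1 - l)).toNat : ℤ), (b : ℤ)) := by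
  rw [Int.toNat_of_nonneg (hpos (k - 1 - l) (by lia))]
  congr 1
  ring

namespace RowsAreHeights

theorem prod_weights {T : ZNCTuple (pathSources k lam b c) (pathTargets k a c)}
    {S : SSYT k lam a b} (H : RowsAreHeights T S) :
    (T.path.map zPathWeight).prod = S.weight := by
  rw [T.prod_map_path, SSYT.weight,
    ← Finset.prod_range_reflect fun i => ∏ j ∈ Finset.range (lam i).toNat, X (S.entry i j)]
  exact Finset.prod_congr rfl fun l hl => (H l (Finset.mem_range.mp hl)).zPathWeight_eq

theorem leftTotal (hlam : AntitoneOn lam (Set.Iio k)) (hpos : ∀ i < k, 0 ≤ lam i) :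
    Relator.LeftTotal (RowsAreHeights (k := k) (lam := lam) (a := a) (b := b) (c := c)) := by
  intro T
  have hheights (i : ℕ) (hi : i < k) : ∃ h, HasHeights (((k - 1 - i : ℕ) : ℤ) + 1 + c) a h
      (lam i).toNat b (T.path.getD (k - 1 - i) []) := by
    have hpath := T.isZPath (show k - 1 - i < k by lia)
    rw [pathSource_eq hpos (by lia), reverse_reverse_index hi] at hpath
    exact HasHeights.exists_heights hpath
  choose! h hh using hheights
  have hcol (i j : ℕ) (hi : i + 1 < k) (hj : (j : ℤ) < lam (i + 1)) : h i j < h (i + 1) j := by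
    have hik : i < k := Nat.lt_of_succ_lt hi
    have hright := hh i hik
    rw [show ((k - 1 - i : ℕ) : ℤ) + 1 + c = ((k - 1 - (i + 1) : ℕ) : ℤ) + 1 + c + 1 by lia]
      at hright
    refine hright.lt_of_disjoint (hh (i + 1) hi) (Int.toNat_le_toNat (hlam hik hi i.le_succ))
      (fun v => ?_) (by lia)
    exact T.disj (k - 1 - i) (k - 1 - (i + 1)) (by rw [T.length_path]; lia)
      (by rw [T.length_path]; lia) (by lia) v
  obtain ⟨S, hS⟩ := exists_ssyt_of_rows hlam (fun i hi => (hh i hi).monotone_heightProfile) hcol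
  refine ⟨S, fun l hl => ?_⟩
  have hrow := hh (k - 1 - l) (by lia)
  rw [reverse_reverse_index hl] at hrow
  exact hrow.congr fun j hj => (hS (k - 1 - l) j (by lia) (by lia)).symm

theorem rightTotal (hlam : AntitoneOn lam (Set.Iio k)) (hpos : ∀ i < k, 0 ≤ lam i)
    (hab : a ≤ b) :
    Relator.RightTotal (RowsAreHeights (k := k) (lam := lam) (a := a) (b := b) (c := c)) := by
  intro S
  have hpaths (l : ℕ) (hl : l < k) : ∃ p, HasHeights ((l : ℤ) + 1 + c) a (S.entry (k - 1 - l))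
      (lam (k - 1 - l)).toNat b p :=
    HasHeights.exists_path _ (S.monotone_heightProfile hab (by lia))
  choose! p hp using hpaths
  have hdisj (l : ℕ) (hl : l < k) (l' : ℕ) (hl' : l' < l) : (p l).Disjoint (p l') := by
    have hrow : k - 1 - l < k - 1 - l' := by lia
    have hrow' : k - 1 - l' < k := by lia
    exact (hp l hl).disjoint (hp l' (hl'.trans hl)) (by lia)
      (Int.toNat_le_toNat (hlam (hrow.trans hrow') hrow' hrow.le))
      fun j hj => S.col_strict _ _ j hrow hrow' (by lia)
  refine ⟨ZNCTuple.ofPaths p (fun l hl => ?_) hdisj, fun l hl => ?_⟩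
  · rw [pathSource_eq hpos hl]
    exact (hp l hl).isZPath
  · rw [ZNCTuple.ofPaths, getD_map_range p [] hl]
    exact hp l hl

theorem biTotal (hlam : AntitoneOn lam (Set.Iio k)) (hpos : ∀ i < k, 0 ≤ lam i) (hab : a ≤ b) :
    Relator.BiTotal (RowsAreHeights (k := k) (lam := lam) (a := a) (b := b) (c := c)) :=
  ⟨leftTotal hlam hpos, rightTotal hlam hpos hab⟩

theorem leftUnique :
    Relator.LeftUnique (RowsAreHeights (k := k) (lam := lam) (a := a) (b := b) (c := c)) := by
  intro T T' S H H'
  refine ZNCTuple.ext ?_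
  rw [T.path_eq_map_range, T'.path_eq_map_range]
  refine List.map_congr_left fun l hl => ?_
  have hlk : l < k := List.mem_range.mp hl
  exact (H l hlk).path_unique (H' l hlk)

theorem rightUnique :
    Relator.RightUnique (RowsAreHeights (k := k) (lam := lam) (a := a) (b := b) (c := c)) := by
  intro T S S' H H'
  ext i j
  by_cases hij : i < k ∧ (j : ℤ) < lam i
  · obtain ⟨hi, hj⟩ := hij
    have hrow := H (k - 1 - i) (by lia)
    have hrow' := H' (k - 1 - i) (by lia)
    rw [reverse_reverse_index hi] at hrow hrow'
    exact hrow.height_unique hrow' (by lia)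
  · rw [S.zero_outside i j hij, S'.zero_outside i j hij]

end RowsAreHeights

end Tableaux

theorem finsum_eq_of_biTotal_of_biUnique {α β M : Type*} [AddCommMonoid M] {r : α → β → Prop}
    (htotal : Relator.BiTotal r) (hunique : Relator.BiUnique r) {f : α → M} {g : β → M}
    (hfg : ∀ x y, r x y → f x = g y) : ∑ᶠ x, f x = ∑ᶠ y, g y := by
  choose e he using htotal.1
  refine finsum_eq_of_bijective e ⟨fun x x' hx => ?_, fun y => ?_⟩ fun x => hfg x (e x) (he x)
  · exact hunique.1 (he x) (hx ▸ he x')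
  · obtain ⟨x, hx⟩ := htotal.2 y
    exact ⟨x, hunique.2 (he x) hx⟩

/-- the sum over `k`-tuples of pairwise vertex-disjoint paths in `ℤ²`,
with the `l`-th path going from `(λ_{k+1-l} + l + c, b)` to `(l + c, a)`, of the product
of their weights, equals the Schur polynomial `s^{[a,b]}_λ`. -/
theorem stmt_10 (k : ℕ) (lam : ℕ → ℤ)
    (hdec : ∀ i, i + 1 < k → lam (i + 1) ≤ lam i) (hpos : ∀ i, i < k → 0 ≤ lam i)
    (a b : ℕ) (ha : 1 ≤ a) (hab : a ≤ b) (c : ℤ) :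
    (∑ᶠ T : ZNCTuple
        ((List.range k).map fun l => (lam (k - 1 - l) + (l : ℤ) + 1 + c, (b : ℤ)))
        ((List.range k).map fun l => ((l : ℤ) + 1 + c, (a : ℤ))),
      (T.path.map zPathWeight).prod) = schur k lam a b := by
  -- In the statement, `List.range k` is coerced to `List ℤ` before the targets are formed.
  have htargets : ((List.range k).map fun l => ((l : ℤ) + 1 + c, (a : ℤ))) = pathTargets k a c := by
    simp [List.map_eq_flatMap, List.flatMap_assoc]
  have hlam : AntitoneOn lam (Set.Iio k) :=
    antitoneOn_of_succ_le Set.ordConnected_Iio fun i _ _ hi => hdec i hi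
  rw [htargets, schur, if_pos ⟨hdec, hpos⟩]
  exact finsum_eq_of_biTotal_of_biUnique (RowsAreHeights.biTotal hlam hpos hab)
    ⟨RowsAreHeights.leftUnique, RowsAreHeights.rightUnique⟩ fun _ _ H => H.prod_weights
end
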